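/- arXiv:2102.06451 — 3 statements merged into one kernel-verified Lean document; each statement's English description precedes it below -/
import Mathlib

section
/- Fix ε ∈ {1, −1}, real numbers k > 0, m ≥ 0, and set ⟨z, z̄⟩ = |z₁|² + ε|z₂|² and K(z,z) = k z₁² + m z₂². Let F : ℂ³ → ℝ (coordinates (z₁, z₂, ζ)) be the real polynomial F = ⟨z, z̄⟩ + F₃ + F₄, where F₃ = 2Re( K(z,z)·conj(ζ) + A₁(z)·|ζ|² + A₂·ζ²·conj(ζ) ) and F₄ = 2Re( (P(z,z,z̄) + Q(z,z,z))·conj(ζ) + R(z,z)·conj(ζ)² ) + S(z,z̄)·|ζ|² + T(z,z,z̄,z̄) + 2Re( B₁(z,z)·|ζ|² + B₂(z)·ζ²·conj(ζ) + B₃(z)·ζ·conj(ζ)² ), with A₁, B₂, B₃ complex linear forms in z, A₂ ∈ ℂ, P a form of bidegree (2,1) in (z, z̄), Q and B₁ complex forms in z of degrees 3 and 2, R a complex quadratic form in z, S a real form of bidegree (1,1), and T a real form of bidegree (2,2). Let H(p) be the 3×3 complex Hessian matrix (∂²F/∂ξ_i ∂conj(ξ_j))(p), ξ = (z₁,z₂,ζ),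 taken with Wirtinger derivatives. If every homogeneous Taylor component of det H at 0 of degree ≤ 2 vanishes, then A₁ = 0, A₂ = 0, B₁ = 0, B₂ = 0, B₃ = 0, and S(z,z̄) = 4(k²|z₁|² + ε m²|z₂|²). -/
open Complex ComplexConjugate Filter Topology

/-- The polarization `𝔽(ξ, η)` of the real polynomial
`F = ⟨z,z̄⟩ + F₃ + F₄` of Lemma 8 (diagonal Hermitian form `|z₁|² + ε |z₂|²`,
`K = k z₁² + m z₂²`), so that `F p = 𝔽 (p, conj p)`.  Here `ξ = (z₁, z₂, ζ)` and
`η` stands for `(z̄₁, z̄₂, ζ̄)`; `𝔽` is holomorphic (polynomial) in each argument. -/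
noncomputable def Fc (ε k m : ℝ) (A1 : Fin 2 → ℂ) (A2 : ℂ)
    (P Q : Fin 2 → Fin 2 → Fin 2 → ℂ) (R : Fin 2 → Fin 2 → ℂ)
    (S : Matrix (Fin 2) (Fin 2) ℂ) (T : Fin 2 → Fin 2 → Fin 2 → Fin 2 → ℂ)
    (B1 : Fin 2 → Fin 2 → ℂ) (B2 B3 : Fin 2 → ℂ)
    (ξ η : Fin 3 → ℂ) : ℂ :=
  -- ⟨z, z̄⟩ = |z₁|² + ε |z₂|²
  ξ 0 * η 0 + (ε : ℂ) * ξ 1 * η 1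
  -- 2 Re (K(z,z) ζ̄)
  + (((k : ℂ) * ξ 0 ^ 2 + (m : ℂ) * ξ 1 ^ 2) * η 2
      + ((k : ℂ) * η 0 ^ 2 + (m : ℂ) * η 1 ^ 2) * ξ 2)
  -- 2 Re (A₁(z) |ζ|²)
  + ((∑ i, A1 i * ξ i.castSucc) * ξ 2 * η 2
      + (∑ i, conj (A1 i) * η i.castSucc) * η 2 * ξ 2)
  -- 2 Re (A₂ ζ² ζ̄)
  + (A2 * ξ 2 ^ 2 * η 2 + conj A2 * η 2 ^ 2 * ξ 2)
  -- 2 Re (P(z,z,z̄) ζ̄)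
  + ((∑ i, ∑ j, ∑ l, P i j l * ξ i.castSucc * ξ j.castSucc * η l.castSucc) * η 2
      + (∑ i, ∑ j, ∑ l, conj (P i j l) * η i.castSucc * η j.castSucc * ξ l.castSucc) * ξ 2)
  -- 2 Re (Q(z,z,z) ζ̄)
  + ((∑ i, ∑ j, ∑ l, Q i j l * ξ i.castSucc * ξ j.castSucc * ξ l.castSucc) * η 2
      + (∑ i, ∑ j, ∑ l, conj (Q i j l) * η i.castSucc * η j.castSucc * η l.castSucc) * ξ 2)
  -- 2 Re (R(z,z) ζ̄²)
  + ((∑ i, ∑ j, R i j * ξ i.castSucc * ξ j.castSucc) * η 2 ^ 2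
      + (∑ i, ∑ j, conj (R i j) * η i.castSucc * η j.castSucc) * ξ 2 ^ 2)
  -- S(z,z̄) |ζ|²
  + (∑ i, ∑ j, S i j * ξ i.castSucc * η j.castSucc) * ξ 2 * η 2
  -- T(z,z,z̄,z̄)
  + (∑ i, ∑ j, ∑ l, ∑ o, T i j l o * ξ i.castSucc * ξ j.castSucc * η l.castSucc * η o.castSucc)
  -- 2 Re (B₁(z,z) |ζ|²)
  + ((∑ i, ∑ j, B1 i j * ξ i.castSucc * ξ j.castSucc) * ξ 2 * η 2
      + (∑ i, ∑ j, conj (B1 i j) * η i.castSucc * η j.castSucc) * η 2 * ξ 2)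
  -- 2 Re (B₂(z) ζ² ζ̄)
  + ((∑ i, B2 i * ξ i.castSucc) * ξ 2 ^ 2 * η 2
      + (∑ i, conj (B2 i) * η i.castSucc) * η 2 ^ 2 * ξ 2)
  -- 2 Re (B₃(z) ζ ζ̄²)
  + ((∑ i, B3 i * ξ i.castSucc) * ξ 2 * η 2 ^ 2
      + (∑ i, conj (B3 i) * η i.castSucc) * η 2 * ξ 2 ^ 2)

/-- The complex (Wirtinger) Hessian `(∂²F/∂ξᵢ∂ξ̄ⱼ)(p)` of the real function
`F p = 𝔽 (p, conj p)`, computed through the polarization `𝔽`. -/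
noncomputable def wirtHess (𝔽 : (Fin 3 → ℂ) → (Fin 3 → ℂ) → ℂ) (p : Fin 3 → ℂ) :
    Matrix (Fin 3) (Fin 3) ℂ :=
  Matrix.of fun i j =>
    deriv (fun t : ℂ =>
      deriv (fun s : ℂ =>
          𝔽 (Function.update p i t) (Function.update (fun l => conj (p l)) j s))
        (conj (p j))) (p i)

/-!
Since `F` is a sum of homogeneous parts of degrees 2, 3 and 4, its Hessian satisfies
`H(tp) = diag(1, ε, 0) + t H₃(p) + t² H₄(p)`. Dividing the last row and the last column by `t` and
taking the Schur complement of the invertible upper block, the condition `det H(tp) / t² → 0`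
becomes `(H₃)_ζζ = 0` and `(H₄)_ζζ = |(H₃)_ζ1|² + ε⁻¹ |(H₃)_ζ2|²`. The first equation says that
`2 Re (A₁(z) + 2 A₂ ζ)` vanishes identically; the second then reads
`S(z, z̄) + 2 Re B₁(z, z) + 4 Re (B₂(z) ζ + B₃(z) ζ̄) = 4 (k² |z₁|² + ε⁻¹ m² |z₂|²)`,
and rotating `z` by unit scalars separates its terms.
-/

section SchurComplement

open Matrix

variable {n ι : Type*} [Fintype n] [DecidableEq n] [Fintype ι] [DecidableEq ι]

theorem det_fromBlocks_smul_smul_sq_smul {R : Type*} [CommRing R]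
    (A : Matrix n n R) (B : Matrix n ι R) (C : Matrix ι n R) (D : Matrix ι ι R) (t : R) :
    (fromBlocks A (t • B) (t • C) (t ^ 2 • D)).det =
      t ^ (2 * Fintype.card ι) * (fromBlocks A B C D).det := by
  have hconj : fromBlocks A (t • B) (t • C) (t ^ 2 • D) =
      fromBlocks 1 0 0 (t • 1) * fromBlocks A B C D * fromBlocks 1 0 0 (t • 1) := by
    simp [fromBlocks_multiply, smul_smul, pow_two]
  simp only [hconj, det_mul, det_fromBlocks_zero₂₁, det_one, det_smul]
  ring

theorem tendsto_add_smul_nhds {α R E : Type*} [TopologicalSpace R] [Zero R] [AddZeroClass E]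
    [TopologicalSpace E] [ContinuousAdd E] [SMulWithZero R E] [ContinuousSMul R E] {l : Filter α}
    {τ : α → R} (hτ : Tendsto τ l (𝓝 0)) {x y : α → E} {x₀ y₀ : E} (hx : Tendsto x l (𝓝 x₀))
    (hy : Tendsto y l (𝓝 y₀)) : Tendsto (fun a => x a + τ a • y a) l (𝓝 x₀) := by
  simpa only [zero_smul, add_zero] using hx.add (hτ.smul hy)

variable {α 𝕜 : Type*} [Field 𝕜] [TopologicalSpace 𝕜] [IsTopologicalRing 𝕜] [ContinuousInv₀ 𝕜]
  [Unique ι] {l : Filter α}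

theorem tendsto_of_tendsto_det_fromBlocks [T1Space 𝕜] {A' : α → Matrix n n 𝕜}
    {B' : α → Matrix n ι 𝕜} {C' : α → Matrix ι n 𝕜} {D' : α → Matrix ι ι 𝕜}
    {A : Matrix n n 𝕜} {B : Matrix n ι 𝕜} {C : Matrix ι n 𝕜} (hdet : A.det ≠ 0)
    (hA : Tendsto A' l (𝓝 A)) (hB : Tendsto B' l (𝓝 B)) (hC : Tendsto C' l (𝓝 C))
    (h : Tendsto (fun a => (fromBlocks (A' a) (B' a) (C' a) (D' a)).det) l (𝓝 0)) :
    Tendsto D' l (𝓝 (C * A⁻¹ * B)) := by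
  have hinv : Tendsto (fun a => (A' a)⁻¹) l (𝓝 A⁻¹) := by
    refine (continuousAt_matrix_inv A ?_).tendsto.comp hA
    simpa only [Ring.inverse_eq_inv'] using continuousAt_inv₀ hdet
  have hdetA : Tendsto (fun a => (A' a).det) l (𝓝 A.det) :=
    (continuous_id.matrix_det.tendsto A).comp hA
  have hschur : Tendsto (fun a => D' a - C' a * (A' a)⁻¹ * B' a) l (𝓝 0) := by
    have hentry : Tendsto (fun a => (D' a - C' a * (A' a)⁻¹ * B' a).det) l (𝓝 0) := by
      rw [← zero_div A.det]
      refine (h.div hdetA hdet).congr' ?_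
      filter_upwards [hdetA.eventually_ne hdet] with a ha
      rw [Pi.div_apply]
      have := invertibleOfIsUnitDet (A' a) ha.isUnit
      rw [det_fromBlocks₁₁, invOf_eq_nonsing_inv, mul_div_cancel_left₀ _ ha]
    simp only [det_unique] at hentry
    refine tendsto_pi_nhds.mpr fun i => tendsto_pi_nhds.mpr fun j => ?_
    rwa [Subsingleton.elim i default, Subsingleton.elim j default]
  have hmul : Continuous fun X : Matrix ι n 𝕜 × Matrix n n 𝕜 × Matrix n ι 𝕜 =>
      X.1 * X.2.1 * X.2.2 := by fun_prop
  have hprod := (hmul.tendsto _).comp (hC.prodMk_nhds (hinv.prodMk_nhds hB))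
  simpa only [Function.comp_def, sub_add_cancel, zero_add] using hschur.add hprod

theorem toBlocks₂₂_eq_of_tendsto_det_div_sq [T2Space 𝕜] [l.NeBot] {τ : α → 𝕜}
    (hτ : Tendsto τ l (𝓝[≠] 0)) {A : Matrix n n 𝕜} (hA : A.det ≠ 0)
    {M N : Matrix (n ⊕ ι) (n ⊕ ι) 𝕜}
    (h : Tendsto (fun a => (fromBlocks A 0 0 0 + τ a • M + τ a ^ 2 • N).det / τ a ^ 2) l (𝓝 0)) :
    M.toBlocks₂₂ = 0 ∧ N.toBlocks₂₂ = M.toBlocks₂₁ * A⁻¹ * M.toBlocks₁₂ := by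
  obtain ⟨hτ₀, hτne⟩ := tendsto_nhdsWithin_iff.mp hτ
  have hlower : Tendsto (fun a => (τ a)⁻¹ • M.toBlocks₂₂ + N.toBlocks₂₂) l
      (𝓝 (M.toBlocks₂₁ * A⁻¹ * M.toBlocks₁₂)) := by
    refine tendsto_of_tendsto_det_fromBlocks hA
      (A' := fun a => A + τ a • (M.toBlocks₁₁ + τ a • N.toBlocks₁₁))
      (tendsto_add_smul_nhds hτ₀ tendsto_const_nhds
        (tendsto_add_smul_nhds hτ₀ tendsto_const_nhds (tendsto_const_nhds (x := N.toBlocks₁₁))))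
      (tendsto_add_smul_nhds hτ₀ tendsto_const_nhds (tendsto_const_nhds (x := N.toBlocks₁₂)))
      (tendsto_add_smul_nhds hτ₀ tendsto_const_nhds (tendsto_const_nhds (x := N.toBlocks₂₁)))
      (h.congr' ?_)
    filter_upwards [hτne] with a (ha : τ a ≠ 0)
    have hscale := det_fromBlocks_smul_smul_sq_smul (A + τ a • (M.toBlocks₁₁ + τ a • N.toBlocks₁₁))
      (M.toBlocks₁₂ + τ a • N.toBlocks₁₂) (M.toBlocks₂₁ + τ a • N.toBlocks₂₁)
      ((τ a)⁻¹ • M.toBlocks₂₂ + N.toBlocks₂₂) (τ a)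
    rw [Fintype.card_unique, mul_one] at hscale
    rw [div_eq_iff (pow_ne_zero 2 ha), mul_comm, ← hscale]
    conv_lhs => rw [← fromBlocks_toBlocks M, ← fromBlocks_toBlocks N]
    simp only [fromBlocks_smul, fromBlocks_add, smul_add, smul_smul, zero_add, pow_two, add_assoc,
      mul_assoc, mul_inv_cancel₀ ha, mul_one]
  have hM : M.toBlocks₂₂ = 0 := by
    have h₀ := hτ₀.smul (hlower.sub_const N.toBlocks₂₂)
    simp only [add_sub_cancel_right, zero_smul] at h₀
    refine tendsto_nhds_unique (tendsto_const_nhds.congr' ?_) h₀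
    filter_upwards [hτne] with a ha
    rw [smul_inv_smul₀ ha]
  refine ⟨hM, tendsto_nhds_unique ?_ hlower⟩
  simpa only [hM, smul_zero, zero_add] using tendsto_const_nhds

theorem apply_last_last_eq_of_tendsto_det_div_sq [T2Space 𝕜] [l.NeBot] {τ : α → 𝕜}
    (hτ : Tendsto τ l (𝓝[≠] 0)) {n : ℕ} {d : Fin n → 𝕜} (hd : ∀ i, d i ≠ 0)
    {M N : Matrix (Fin (n + 1)) (Fin (n + 1)) 𝕜}
    (h : Tendsto (fun a => (diagonal (Fin.snoc d 0 : Fin (n + 1) → 𝕜) + τ a • M +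
      τ a ^ 2 • N).det / τ a ^ 2) l (𝓝 0)) :
    M (Fin.last n) (Fin.last n) = 0 ∧
      N (Fin.last n) (Fin.last n) =
        ∑ i : Fin n, M (Fin.last n) i.castSucc * (d i)⁻¹ * M i.castSucc (Fin.last n) := by
  obtain ⟨e, hinl, hinr⟩ : ∃ e : Fin n ⊕ Fin 1 ≃ Fin (n + 1),
      (∀ i, e (.inl i) = i.castSucc) ∧ ∀ i, e (.inr i) = Fin.last n :=
    ⟨finSumFinEquiv, fun _ => finSumFinEquiv_apply_left _,
      fun i => by rw [Subsingleton.elim i 0]; rfl⟩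
  have hdet : (diagonal d).det ≠ 0 := by
    rw [det_diagonal]
    exact Finset.prod_ne_zero_iff.mpr fun i _ => hd i
  have hinv : (diagonal d)⁻¹ = diagonal fun i => (d i)⁻¹ := by
    refine inv_eq_right_inv ?_
    simp only [diagonal_mul_diagonal, mul_inv_cancel₀ (hd _), diagonal_one]
  have hdiag : (diagonal (Fin.snoc d 0 : Fin (n + 1) → 𝕜)).submatrix e e =
      fromBlocks (diagonal d) 0 0 0 := by
    rw [submatrix_diagonal_equiv, ← diagonal_zero, fromBlocks_diagonal]
    congr 1
    ext (i | i)
    · simp [hinl]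
    · simp [hinr]
  have hblock : Tendsto (fun a => (fromBlocks (diagonal d) 0 0 0 + τ a • M.submatrix e e +
      τ a ^ 2 • N.submatrix e e).det / τ a ^ 2) l (𝓝 0) := by
    refine h.congr fun a => ?_
    rw [← det_submatrix_equiv_self e, submatrix_add, submatrix_add, submatrix_smul, submatrix_smul]
    simp only [Pi.add_apply, Pi.smul_apply, hdiag]
  obtain ⟨hM, hN⟩ := toBlocks₂₂_eq_of_tendsto_det_div_sq hτ hdet hblock
  have hMlast := congr_fun₂ hM 0 0
  have hNlast := congr_fun₂ hN 0 0
  rw [hinv, mul_apply] at hNlast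
  simp only [mul_diagonal, toBlocks₂₂, toBlocks₂₁, toBlocks₁₂, of_apply, submatrix_apply, hinl,
    hinr, Matrix.zero_apply] at hMlast hNlast
  exact ⟨hMlast, hNlast⟩

end SchurComplement

theorem eq_zero_of_add_re_eq_zero {E : Type*} [SMul ℂ E] {n : ℕ} (hn : n ≠ 0) {f g : E → ℂ}
    (hf : ∀ (c : ℂ) z, f (c • z) = c ^ n * f z) (hg : ∀ (c : ℂ) z, ‖c‖ = 1 → g (c • z) = g z)
    (h : ∀ z, g z + (f z).re = 0) (z : E) : f z = 0 ∧ g z = 0 := by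
  -- Rotating `z` by an `n`-th root of `u` multiplies `f z` by `u` and fixes `g z`.
  have rotate {u : ℂ} (hu : ‖u‖ = 1) : g z + (u * f z).re = 0 := by
    obtain ⟨c, hc⟩ := IsAlgClosed.exists_pow_nat_eq u (Nat.pos_of_ne_zero hn)
    have hc1 : ‖c‖ = 1 := by
      rwa [← pow_eq_one_iff_of_nonneg (norm_nonneg c) hn, ← norm_pow, hc]
    simpa only [hf, hg c z hc1, hc] using h (c • z)
  have hpos := rotate norm_one
  have hneg := rotate (u := -1) (by simp)
  have hI := rotate norm_I
  have hgz : g z = 0 := by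
    simp only [one_mul, neg_mul, neg_re, ofReal_neg] at hpos hneg
    linear_combination (hpos + hneg) / 2
  refine ⟨Complex.ext ?_ ?_, hgz⟩
  · simpa [hgz] using hpos
  · simpa [hgz] using hI

theorem eq_zero_of_mul_add_mul_conj_eq_zero {a b : ℂ}
    (h : ∀ ζ : ℂ, a * ζ + b * conj ζ = 0) : a = 0 ∧ b = 0 := by
  have h₁ := h 1
  have hI := h I
  simp only [map_one, mul_one, conj_I] at h₁ hI
  have hsub : a - b = 0 := by
    apply mul_right_cancel₀ I_ne_zero
    linear_combination hI
  exact ⟨by linear_combination (h₁ + hsub) / 2, by linear_combination (h₁ - hsub) / 2⟩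

theorem eq_zero_of_add_re_add_mul_add_mul_conj_eq_zero {E : Type*} [SMul ℂ E] {n : ℕ}
    (hn : n ≠ 0) {s b₁ b₂ b₃ : E → ℂ} (hs : ∀ (c : ℂ) z, ‖c‖ = 1 → s (c • z) = s z)
    (hb₁ : ∀ (c : ℂ) z, b₁ (c • z) = c ^ n * b₁ z) (hb₂ : ∀ (c : ℂ) z, b₂ (c • z) = c * b₂ z)
    (hb₃ : ∀ (c : ℂ) z, b₃ (c • z) = c * b₃ z)
    (h : ∀ z ζ, s z + (b₁ z + (b₂ z * ζ + b₃ z * conj ζ)).re = 0) (z : E) :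
    s z = 0 ∧ b₁ z = 0 ∧ b₂ z = 0 ∧ b₃ z = 0 := by
  have hζ_zero (z : E) : b₁ z = 0 ∧ s z = 0 :=
    eq_zero_of_add_re_eq_zero hn hb₁ hs (fun z => by simpa using h z 0) z
  have hmixed (ζ : ℂ) : b₂ z * ζ + b₃ z * conj ζ = 0 := by
    refine (eq_zero_of_add_re_eq_zero one_ne_zero (f := fun z => b₂ z * ζ + b₃ z * conj ζ)
      (g := fun _ => 0) (fun c z => ?_) (fun _ _ _ => rfl) (fun z => ?_) z).1
    · rw [hb₂, hb₃]
      ring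
    · simpa only [hζ_zero, zero_add] using h z ζ
  exact ⟨(hζ_zero z).2, (hζ_zero z).1, eq_zero_of_mul_add_mul_conj_eq_zero hmixed⟩

section WirtingerHessian

open Function

variable {𝔽 𝔾 : (Fin 3 → ℂ) → (Fin 3 → ℂ) → ℂ}

theorem deriv_deriv_comp_mul_left {𝕜 F : Type*} [NontriviallyNormedField 𝕜]
    [NormedAddCommGroup F] [NormedSpace 𝕜 F] (f : 𝕜 → 𝕜 → F) (c a b : 𝕜) :
    deriv (fun t => deriv (fun s => f (c * t) (c * s)) b) a =
      c ^ 2 • deriv (fun t => deriv (f t) (c * b)) (c * a) := by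
  have hinner (t : 𝕜) : deriv (fun s => f (c * t) (c * s)) b = c • deriv (f (c * t)) (c * b) :=
    deriv_comp_mul_left c (f (c * t)) b
  simp only [hinner, pow_two, mul_smul]
  rw [deriv_fun_const_smul_field, deriv_comp_mul_left c (fun t => deriv (f t) (c * b)) a]

theorem wirtHess_smul {d : ℕ} {t : ℝ} (ht : t ≠ 0)
    (h𝔽 : ∀ ξ η, 𝔽 (t • ξ) (t • η) = (t : ℂ) ^ (d + 2) * 𝔽 ξ η) (p : Fin 3 → ℂ) :
    wirtHess 𝔽 (t • p) = (t : ℂ) ^ d • wirtHess 𝔽 p := by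
  have htℂ : (t : ℂ) ≠ 0 := ofReal_ne_zero.mpr ht
  have hupdate (q : Fin 3 → ℂ) (i : Fin 3) (s : ℂ) :
      update (t • q) i (t * s) = t • update q i s := by
    rw [← update_smul, real_smul]
  have hconj : (fun l => (t : ℂ) * conj (p l)) = t • fun l => conj (p l) := by
    ext l
    rw [Pi.smul_apply, real_smul]
  ext i j
  have hscale := deriv_deriv_comp_mul_left
    (fun u s => 𝔽 (update (t • p) i u) (update (t • fun l => conj (p l)) j s))
    t (p i) (conj (p j))
  simp only [hupdate, h𝔽, deriv_const_mul_field] at hscale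
  rw [pow_add, mul_comm ((t : ℂ) ^ d), mul_assoc] at hscale
  have := mul_left_cancel₀ (pow_ne_zero 2 htℂ) hscale
  simpa only [wirtHess, Matrix.of_apply, Matrix.smul_apply, Pi.smul_apply, real_smul, map_mul,
    conj_ofReal, hconj, smul_eq_mul] using this.symm

theorem deriv_deriv_fun_add {𝕜 F : Type*} [NontriviallyNormedField 𝕜] [NormedAddCommGroup F]
    [NormedSpace 𝕜 F] {f g : 𝕜 → 𝕜 → F} (hf : ContDiff 𝕜 2 (uncurry f))
    (hg : ContDiff 𝕜 2 (uncurry g)) (a b : 𝕜) :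
    deriv (fun t => deriv (fun s => f t s + g t s) b) a =
      deriv (fun t => deriv (f t) b) a + deriv (fun t => deriv (g t) b) a := by
  have differentiableAt_right {h : 𝕜 → 𝕜 → F} (hh : ContDiff 𝕜 2 (uncurry h)) (t : 𝕜) :
      DifferentiableAt 𝕜 (h t) b :=
    (hh.comp (contDiff_prodMk_right t)).differentiable two_ne_zero b
  have differentiableAt_deriv {h : 𝕜 → 𝕜 → F} (hh : ContDiff 𝕜 2 (uncurry h)) :
      DifferentiableAt 𝕜 (fun t => deriv (h t) b) a := by
    simp only [← fderiv_apply_one_eq_deriv]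
    exact (((hh.fderiv (contDiff_const (c := b)) le_rfl).clm_apply contDiff_const).differentiable
      one_ne_zero) a
  simp only [deriv_fun_add (differentiableAt_right hf _) (differentiableAt_right hg _)]
  exact deriv_fun_add (differentiableAt_deriv hf) (differentiableAt_deriv hg)

-- The second difference on the left of `h` kills the summands of `f` that depend on one variable
-- only, and these do not contribute to the mixed derivative.
theorem deriv_deriv_eq_of_sub_sub_add_eq {𝕜 : Type*} [NontriviallyNormedField 𝕜]
    {f : 𝕜 → 𝕜 → 𝕜} (hf : Differentiable 𝕜 (f 0)) {α β γ : 𝕜}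
    (h : ∀ t s, f t s - f t 0 - f 0 s + f 0 0 = α * t * s + β * t ^ 2 * s + γ * t * s ^ 2)
    (a b : 𝕜) :
    deriv (fun t => deriv (f t) b) a = α + 2 * β * a + 2 * γ * b := by
  have hinner (t : 𝕜) : deriv (f t) b = α * t + β * t ^ 2 + γ * t * (2 * b) + deriv (f 0) b := by
    have hft : f t = fun s => α * t * s + β * t ^ 2 * s + γ * t * s ^ 2 + f 0 s
        + (f t 0 - f 0 0) := by
      ext s
      linear_combination h t s
    have hpoly : HasDerivAt (fun s => α * t * s + β * t ^ 2 * s + γ * t * s ^ 2)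
        (α * t * 1 + β * t ^ 2 * 1 + γ * t * (2 * b)) b := by
      refine (((hasDerivAt_id' b).const_mul _).fun_add
        ((hasDerivAt_id' b).const_mul _)).fun_add (HasDerivAt.const_mul _ ?_)
      simpa using hasDerivAt_pow 2 b
    rw [hft, ((hpoly.fun_add (hf b).hasDerivAt).add_const _).deriv, mul_one, mul_one]
  have houter : HasDerivAt (fun t => α * t + β * t ^ 2 + γ * t * (2 * b) + deriv (f 0) b)
      (α * 1 + β * (2 * a) + γ * 1 * (2 * b)) a := by
    refine ((((hasDerivAt_id' a).const_mul _).fun_add (HasDerivAt.const_mul _ ?_)).fun_add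
      (((hasDerivAt_id' a).const_mul _).mul_const _)).add_const _
    simpa using hasDerivAt_pow 2 a
  rw [funext hinner, houter.deriv]
  ring

theorem wirtHess_apply_eq_of_sub_sub_add_eq (h𝔽 : ContDiff ℂ 1 (uncurry 𝔽)) {p : Fin 3 → ℂ}
    {i j : Fin 3} {α β γ : ℂ}
    (h : ∀ t s, 𝔽 (update p i t) (update (fun l => conj (p l)) j s) -
        𝔽 (update p i t) (update (fun l => conj (p l)) j 0) -
        𝔽 (update p i 0) (update (fun l => conj (p l)) j s) +
        𝔽 (update p i 0) (update (fun l => conj (p l)) j 0) =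
      α * t * s + β * t ^ 2 * s + γ * t * s ^ 2) :
    wirtHess 𝔽 p i j = α + 2 * β * p i + 2 * γ * conj (p j) :=
  deriv_deriv_eq_of_sub_sub_add_eq
    ((h𝔽.comp ((contDiff_prodMk_right _).comp (contDiff_update 1 _ j))).differentiable one_ne_zero)
    h _ _

theorem wirtHess_add (h𝔽 : ContDiff ℂ 2 (uncurry 𝔽)) (h𝔾 : ContDiff ℂ 2 (uncurry 𝔾))
    (p : Fin 3 → ℂ) : wirtHess (𝔽 + 𝔾) p = wirtHess 𝔽 p + wirtHess 𝔾 p := by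
  ext i j
  have hupdate : ContDiff ℂ 2 (Prod.map (update p i) (update (fun l => conj (p l)) j)) :=
    (contDiff_update 2 _ _).prodMap (contDiff_update 2 _ _)
  exact deriv_deriv_fun_add (h𝔽.comp hupdate) (h𝔾.comp hupdate) (p i) (conj (p j))

end WirtingerHessian

section HomogeneousParts

/-- The summand `⟨z, z̄⟩` of `Fc`, polarized like `Fc`. -/
noncomputable def quadraticPart (ε : ℝ) (ξ η : Fin 3 → ℂ) : ℂ :=
  ξ 0 * η 0 + (ε : ℂ) * ξ 1 * η 1

/-- The summand `F₃` of `Fc`, polarized like `Fc`. -/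
noncomputable def cubicPart (k m : ℝ) (A1 : Fin 2 → ℂ) (A2 : ℂ) (ξ η : Fin 3 → ℂ) : ℂ :=
  (((k : ℂ) * ξ 0 ^ 2 + (m : ℂ) * ξ 1 ^ 2) * η 2
      + ((k : ℂ) * η 0 ^ 2 + (m : ℂ) * η 1 ^ 2) * ξ 2)
    + ((∑ i, A1 i * ξ i.castSucc) * ξ 2 * η 2
      + (∑ i, conj (A1 i) * η i.castSucc) * η 2 * ξ 2)
    + (A2 * ξ 2 ^ 2 * η 2 + conj A2 * η 2 ^ 2 * ξ 2)

/-- The summand `F₄` of `Fc`, polarized like `Fc`. -/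
noncomputable def quarticPart (P Q : Fin 2 → Fin 2 → Fin 2 → ℂ) (R : Fin 2 → Fin 2 → ℂ)
    (S : Matrix (Fin 2) (Fin 2) ℂ) (T : Fin 2 → Fin 2 → Fin 2 → Fin 2 → ℂ)
    (B1 : Fin 2 → Fin 2 → ℂ) (B2 B3 : Fin 2 → ℂ) (ξ η : Fin 3 → ℂ) : ℂ :=
  ((∑ i, ∑ j, ∑ l, P i j l * ξ i.castSucc * ξ j.castSucc * η l.castSucc) * η 2
      + (∑ i, ∑ j, ∑ l, conj (P i j l) * η i.castSucc * η j.castSucc * ξ l.castSucc) * ξ 2)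
    + ((∑ i, ∑ j, ∑ l, Q i j l * ξ i.castSucc * ξ j.castSucc * ξ l.castSucc) * η 2
      + (∑ i, ∑ j, ∑ l, conj (Q i j l) * η i.castSucc * η j.castSucc * η l.castSucc) * ξ 2)
    + ((∑ i, ∑ j, R i j * ξ i.castSucc * ξ j.castSucc) * η 2 ^ 2
      + (∑ i, ∑ j, conj (R i j) * η i.castSucc * η j.castSucc) * ξ 2 ^ 2)
    + (∑ i, ∑ j, S i j * ξ i.castSucc * η j.castSucc) * ξ 2 * η 2
    + (∑ i, ∑ j, ∑ l, ∑ o,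
        T i j l o * ξ i.castSucc * ξ j.castSucc * η l.castSucc * η o.castSucc)
    + ((∑ i, ∑ j, B1 i j * ξ i.castSucc * ξ j.castSucc) * ξ 2 * η 2
      + (∑ i, ∑ j, conj (B1 i j) * η i.castSucc * η j.castSucc) * η 2 * ξ 2)
    + ((∑ i, B2 i * ξ i.castSucc) * ξ 2 ^ 2 * η 2
      + (∑ i, conj (B2 i) * η i.castSucc) * η 2 ^ 2 * ξ 2)
    + ((∑ i, B3 i * ξ i.castSucc) * ξ 2 * η 2 ^ 2
      + (∑ i, conj (B3 i) * η i.castSucc) * η 2 * ξ 2 ^ 2)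

variable (ε k m : ℝ) (A1 : Fin 2 → ℂ) (A2 : ℂ) (P Q : Fin 2 → Fin 2 → Fin 2 → ℂ)
  (R : Fin 2 → Fin 2 → ℂ) (S : Matrix (Fin 2) (Fin 2) ℂ)
  (T : Fin 2 → Fin 2 → Fin 2 → Fin 2 → ℂ) (B1 : Fin 2 → Fin 2 → ℂ) (B2 B3 : Fin 2 → ℂ)

theorem Fc_eq_add :
    Fc ε k m A1 A2 P Q R S T B1 B2 B3 =
      quadraticPart ε + cubicPart k m A1 A2 + quarticPart P Q R S T B1 B2 B3 := by
  ext ξ η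
  simp only [Fc, quadraticPart, cubicPart, quarticPart, Pi.add_apply, add_assoc]

theorem contDiff_quadraticPart : ContDiff ℂ 2 (Function.uncurry (quadraticPart ε)) := by
  simp only [Function.uncurry_def, quadraticPart]
  fun_prop

theorem contDiff_cubicPart : ContDiff ℂ 2 (Function.uncurry (cubicPart k m A1 A2)) := by
  simp only [Function.uncurry_def, cubicPart]
  fun_prop

theorem contDiff_quarticPart :
    ContDiff ℂ 2 (Function.uncurry (quarticPart P Q R S T B1 B2 B3)) := by
  simp only [Function.uncurry_def, quarticPart]
  fun_prop

variable {ε k m A1 A2 P Q R S T B1 B2 B3}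

theorem cubicPart_smul (t : ℝ) (ξ η : Fin 3 → ℂ) :
    cubicPart k m A1 A2 (t • ξ) (t • η) = (t : ℂ) ^ 3 * cubicPart k m A1 A2 ξ η := by
  simp only [cubicPart, Pi.smul_apply, real_smul, Fin.sum_univ_two]
  ring

theorem quarticPart_smul (t : ℝ) (ξ η : Fin 3 → ℂ) :
    quarticPart P Q R S T B1 B2 B3 (t • ξ) (t • η) =
      (t : ℂ) ^ 4 * quarticPart P Q R S T B1 B2 B3 ξ η := by
  simp only [quarticPart, Pi.smul_apply, real_smul, Fin.sum_univ_two]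
  ring

theorem wirtHess_quadraticPart (p : Fin 3 → ℂ) :
    wirtHess (quadraticPart ε) p = Matrix.diagonal ![1, (ε : ℂ), 0] := by
  ext i j
  fin_cases i <;> fin_cases j <;> simp [wirtHess, quadraticPart]

theorem wirtHess_Fc_smul {t : ℝ} (ht : t ≠ 0) (p : Fin 3 → ℂ) :
    wirtHess (Fc ε k m A1 A2 P Q R S T B1 B2 B3) (t • p) =
      Matrix.diagonal ![1, (ε : ℂ), 0] + (t : ℂ) • wirtHess (cubicPart k m A1 A2) p +
        (t : ℂ) ^ 2 • wirtHess (quarticPart P Q R S T B1 B2 B3) p := by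
  have h₂ := contDiff_quadraticPart ε
  have h₃ := contDiff_cubicPart k m A1 A2
  have h₂₃ : ContDiff ℂ 2 (Function.uncurry (quadraticPart ε + cubicPart k m A1 A2)) := h₂.add h₃
  rw [Fc_eq_add, wirtHess_add h₂₃ (contDiff_quarticPart P Q R S T B1 B2 B3),
    wirtHess_add h₂ h₃, wirtHess_quadraticPart, wirtHess_smul (d := 1) ht (cubicPart_smul t),
    wirtHess_smul (d := 2) ht (quarticPart_smul t), pow_one]

theorem wirtHess_cubicPart_castSucc_two (p : Fin 3 → ℂ) (i : Fin 2) :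
    wirtHess (cubicPart k m A1 A2) p i.castSucc 2 =
      2 * (![k, m] i : ℂ) * p i.castSucc + A1 i * p 2 := by
  rw [wirtHess_apply_eq_of_sub_sub_add_eq ((contDiff_cubicPart k m A1 A2).of_le one_le_two)
    (α := A1 i * p 2) (β := (![k, m] i : ℂ)) (γ := 0)]
  · ring
  · intro t s
    fin_cases i <;> simp only [cubicPart, Fin.zero_eta, Fin.mk_one, Fin.isValue,
      Fin.castSucc_zero, Fin.castSucc_one, Function.update_self, ne_eq, one_ne_zero, zero_ne_one,
      not_false_eq_true, Function.update_of_ne, Fin.reduceEq, Fin.sum_univ_two,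
      Matrix.cons_val_zero, Matrix.cons_val_one, Matrix.cons_val_fin_one] <;> ring

theorem wirtHess_cubicPart_two_castSucc (p : Fin 3 → ℂ) (i : Fin 2) :
    wirtHess (cubicPart k m A1 A2) p 2 i.castSucc =
      conj (2 * (![k, m] i : ℂ) * p i.castSucc + A1 i * p 2) := by
  rw [wirtHess_apply_eq_of_sub_sub_add_eq ((contDiff_cubicPart k m A1 A2).of_le one_le_two)
    (α := conj (A1 i * p 2)) (β := 0) (γ := (![k, m] i : ℂ))]
  · simp only [map_add, map_mul, map_ofNat, conj_ofReal]
    ring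
  · intro t s
    fin_cases i <;> simp only [cubicPart, Fin.zero_eta, Fin.mk_one, Fin.isValue,
      Fin.castSucc_zero, Fin.castSucc_one, Function.update_self, ne_eq, one_ne_zero, zero_ne_one,
      not_false_eq_true, Function.update_of_ne, Fin.reduceEq, Fin.sum_univ_two, map_mul,
      Matrix.cons_val_zero, Matrix.cons_val_one, Matrix.cons_val_fin_one] <;> ring

theorem wirtHess_cubicPart_two_two (p : Fin 3 → ℂ) :
    wirtHess (cubicPart k m A1 A2) p 2 2 =
      ((2 * (∑ i, A1 i * p i.castSucc + 2 * A2 * p 2)).re : ℂ) := by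
  rw [wirtHess_apply_eq_of_sub_sub_add_eq ((contDiff_cubicPart k m A1 A2).of_le one_le_two)
    (β := A2) (γ := conj A2)
    (α := ∑ i, A1 i * p i.castSucc + conj (∑ i, A1 i * p i.castSucc))]
  · simp only [re_eq_add_conj, map_add, map_mul, map_ofNat]
    ring
  · intro t s
    simp only [cubicPart, Fin.isValue, ne_eq, Fin.reduceEq, not_false_eq_true,
      Function.update_of_ne, Function.update_self, Fin.sum_univ_two, Fin.castSucc_zero,
      Fin.castSucc_one, map_add, map_mul]
    ring

theorem wirtHess_quarticPart_two_two (p : Fin 3 → ℂ) :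
    wirtHess (quarticPart P Q R S T B1 B2 B3) p 2 2 =
      ∑ i, ∑ j, S i j * p i.castSucc * conj (p j.castSucc) +
        ((2 * ∑ i, ∑ j, B1 i j * p i.castSucc * p j.castSucc +
          4 * ((∑ i, B2 i * p i.castSucc) * p 2 +
            (∑ i, B3 i * p i.castSucc) * conj (p 2))).re : ℂ) := by
  rw [wirtHess_apply_eq_of_sub_sub_add_eq
    ((contDiff_quarticPart P Q R S T B1 B2 B3).of_le one_le_two)
    (α := ∑ i, ∑ j, S i j * p i.castSucc * conj (p j.castSucc) +
      (∑ i, ∑ j, B1 i j * p i.castSucc * p j.castSucc +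
        conj (∑ i, ∑ j, B1 i j * p i.castSucc * p j.castSucc)))
    (β := ∑ i, B2 i * p i.castSucc + conj (∑ i, B3 i * p i.castSucc))
    (γ := ∑ i, B3 i * p i.castSucc + conj (∑ i, B2 i * p i.castSucc))]
  · simp only [re_eq_add_conj, map_add, map_mul, map_ofNat, conj_conj]
    ring
  · intro t s
    simp only [quarticPart, Fin.isValue, ne_eq, Fin.reduceEq, not_false_eq_true,
      Function.update_of_ne, Function.update_self, Fin.sum_univ_two, Fin.castSucc_zero,
      Fin.castSucc_one, map_add, map_mul]
    ring

theorem wirtHess_two_two_eq_of_tendsto_det_div_sq (hε : ε ≠ 0) {p : Fin 3 → ℂ}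
    (h : Tendsto (fun t : ℝ =>
        (wirtHess (Fc ε k m A1 A2 P Q R S T B1 B2 B3) (t • p)).det / (t : ℂ) ^ 2)
      (𝓝[≠] (0 : ℝ)) (𝓝 0)) :
    wirtHess (cubicPart k m A1 A2) p 2 2 = 0 ∧
      wirtHess (quarticPart P Q R S T B1 B2 B3) p 2 2 =
        ∑ i : Fin 2, wirtHess (cubicPart k m A1 A2) p 2 i.castSucc * (![1, (ε : ℂ)] i)⁻¹ *
          wirtHess (cubicPart k m A1 A2) p i.castSucc 2 := by
  have hd (i : Fin 2) : ![1, (ε : ℂ)] i ≠ 0 := by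
    fin_cases i
    · exact one_ne_zero
    · exact ofReal_ne_zero.mpr hε
  have hτ : Tendsto ((↑) : ℝ → ℂ) (𝓝[≠] 0) (𝓝[≠] 0) :=
    continuous_ofReal.continuousWithinAt.tendsto_nhdsWithin fun _ => ofReal_ne_zero.mpr
  refine apply_last_last_eq_of_tendsto_det_div_sq hτ hd (h.congr' ?_)
  filter_upwards [self_mem_nhdsWithin] with t ht
  have hsnoc : (Fin.snoc ![1, (ε : ℂ)] 0 : Fin 3 → ℂ) = ![1, (ε : ℂ), 0] := by
    ext i
    fin_cases i <;> rfl
  rw [hsnoc, wirtHess_Fc_smul ht]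

theorem eq_zero_of_wirtHess_cubicPart_two_two_eq_zero
    (h : ∀ p, wirtHess (cubicPart k m A1 A2) p 2 2 = 0) : A1 = 0 ∧ A2 = 0 := by
  have hform (p : Fin 3 → ℂ) : 2 * (∑ i, A1 i * p i.castSucc + 2 * A2 * p 2) = 0 := by
    refine (eq_zero_of_add_re_eq_zero one_ne_zero (g := fun _ => 0)
      (f := fun p : Fin 3 → ℂ => 2 * (∑ i, A1 i * p i.castSucc + 2 * A2 * p 2))
      (fun c p => ?_) (fun _ _ _ => rfl) (fun p => ?_) p).1
    · simp only [Pi.smul_apply, smul_eq_mul, Fin.sum_univ_two]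
      ring
    · rw [zero_add, ← wirtHess_cubicPart_two_two, h]
  constructor
  · ext i
    have := hform (Pi.single i.castSucc 1)
    fin_cases i <;> simpa using this
  · simpa using hform (Pi.single 2 1)

theorem forms_eq_of_wirtHess_quarticPart_two_two_eq {c : Fin 2 → ℂ}
    (h : ∀ p, wirtHess (quarticPart P Q R S T B1 B2 B3) p 2 2 =
      ∑ i, c i * p i.castSucc * conj (p i.castSucc)) (z : Fin 2 → ℂ) :
    ∑ i, ∑ j, S i j * z i * conj (z j) = ∑ i, c i * z i * conj (z i) ∧
      ∑ i, ∑ j, B1 i j * z i * z j = 0 ∧ ∑ i, B2 i * z i = 0 ∧ ∑ i, B3 i * z i = 0 := by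
  have hζ (z : Fin 2 → ℂ) (ζ : ℂ) :
      (∑ i, ∑ j, S i j * z i * conj (z j) - ∑ i, c i * z i * conj (z i)) +
        ((2 * ∑ i, ∑ j, B1 i j * z i * z j + (4 * (∑ i, B2 i * z i) * ζ +
          4 * (∑ i, B3 i * z i) * conj ζ)).re : ℂ) = 0 := by
    have := h (Fin.snoc (α := fun _ => ℂ) z ζ)
    rw [wirtHess_quarticPart_two_two] at this
    simp only [Fin.snoc_castSucc, show (2 : Fin 3) = Fin.last 2 from rfl, Fin.snoc_last] at this
    rw [← sub_eq_zero, ← this]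
    ring_nf
  have hunit {u : ℂ} (hu : ‖u‖ = 1) (a b : ℂ) : (u * a) * conj (u * b) = a * conj b := by
    rw [map_mul, mul_mul_mul_comm, mul_conj', hu, ofReal_one, one_pow, one_mul]
  have hlinear (b : Fin 2 → ℂ) (u : ℂ) (z : Fin 2 → ℂ) :
      ∑ i, b i * (u • z) i = u * ∑ i, b i * z i := dotProduct_smul u b z
  obtain ⟨hS, hB1, hB2, hB3⟩ := eq_zero_of_add_re_add_mul_add_mul_conj_eq_zero two_ne_zero
    (s := fun z : Fin 2 → ℂ => ∑ i, ∑ j, S i j * z i * conj (z j) - ∑ i, c i * z i * conj (z i))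
    (fun u z hu => by
      simp only [Pi.smul_apply, smul_eq_mul, mul_assoc (S _ _), mul_assoc (c _), hunit hu])
    (fun u z => by
      simp only [Pi.smul_apply, smul_eq_mul, Fin.sum_univ_two]
      ring)
    (fun u z => by rw [hlinear, mul_left_comm]) (fun u z => by rw [hlinear, mul_left_comm]) hζ z
  exact ⟨sub_eq_zero.mp hS, by simpa using hB1, by simpa using hB2, by simpa using hB3⟩

end HomogeneousParts

theorem stmt_1_general {ε k m : ℝ} (hε : ε ≠ 0) {A1 : Fin 2 → ℂ} {A2 : ℂ}
    {P Q : Fin 2 → Fin 2 → Fin 2 → ℂ} {R : Fin 2 → Fin 2 → ℂ}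
    {S : Matrix (Fin 2) (Fin 2) ℂ} {T : Fin 2 → Fin 2 → Fin 2 → Fin 2 → ℂ}
    {B1 : Fin 2 → Fin 2 → ℂ} {B2 B3 : Fin 2 → ℂ}
    (hdeg : ∀ p : Fin 3 → ℂ,
      Tendsto (fun t : ℝ =>
          (wirtHess (Fc ε k m A1 A2 P Q R S T B1 B2 B3) (t • p)).det / (t : ℂ) ^ 2)
        (𝓝[≠] (0 : ℝ)) (𝓝 0)) :
    (∀ z : Fin 2 → ℂ, ∑ i, A1 i * z i = 0) ∧
    A2 = 0 ∧
    (∀ z : Fin 2 → ℂ, ∑ i, ∑ j, B1 i j * z i * z j = 0) ∧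
    (∀ z : Fin 2 → ℂ, ∑ i, B2 i * z i = 0) ∧
    (∀ z : Fin 2 → ℂ, ∑ i, B3 i * z i = 0) ∧
    (∀ z : Fin 2 → ℂ, ∑ i, ∑ j, S i j * z i * conj (z j)
        = 4 * ((k : ℂ) ^ 2 * z 0 * conj (z 0) + (ε : ℂ)⁻¹ * (m : ℂ) ^ 2 * z 1 * conj (z 1))) := by
  obtain ⟨rfl, rfl⟩ := eq_zero_of_wirtHess_cubicPart_two_two_eq_zero fun p =>
    (wirtHess_two_two_eq_of_tendsto_det_div_sq hε (hdeg p)).1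
  have hschur (p : Fin 3 → ℂ) : wirtHess (quarticPart P Q R S T B1 B2 B3) p 2 2 =
      ∑ i, ![4 * (k : ℂ) ^ 2, 4 * ((ε : ℂ)⁻¹ * (m : ℂ) ^ 2)] i * p i.castSucc *
        conj (p i.castSucc) := by
    rw [(wirtHess_two_two_eq_of_tendsto_det_div_sq hε (hdeg p)).2]
    simp only [wirtHess_cubicPart_two_castSucc, wirtHess_cubicPart_castSucc_two, Pi.zero_apply,
      zero_mul, add_zero, map_mul, map_ofNat, conj_ofReal, Fin.sum_univ_two, Fin.isValue,
      Nat.succ_eq_add_one, Nat.reduceAdd, Matrix.cons_val_zero, Matrix.cons_val_one,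
      Matrix.cons_val_fin_one, inv_one]
    ring
  have hquartic := forms_eq_of_wirtHess_quarticPart_two_two_eq hschur
  refine ⟨fun z => by simp, rfl, fun z => (hquartic z).2.1, fun z => (hquartic z).2.2.1,
    fun z => (hquartic z).2.2.2, fun z => (hquartic z).1.trans ?_⟩
  simp only [Nat.succ_eq_add_one, Nat.reduceAdd, Fin.sum_univ_two, Fin.isValue,
    Matrix.cons_val_zero, Matrix.cons_val_one, Matrix.cons_val_fin_one]
  ring

/-- Lemma 8 (diagonal cases): if every homogeneous Taylor component of degree ≤ 2 of the
determinant of the complex Hessian of `F` vanishes at `0`, then `A₁ = A₂ = B₁ = B₂ = B₃ = 0`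
and `S(z, z̄) = 4 (k² |z₁|² + ε m² |z₂|²)`. -/
theorem stmt_1 (ε : ℝ) (hε : ε = 1 ∨ ε = -1) (k m : ℝ) (hk : 0 < k) (hm : 0 ≤ m)
    (A1 : Fin 2 → ℂ) (A2 : ℂ)
    (P Q : Fin 2 → Fin 2 → Fin 2 → ℂ) (R : Fin 2 → Fin 2 → ℂ)
    (S : Matrix (Fin 2) (Fin 2) ℂ) (hS : S.conjTranspose = S)
    (T : Fin 2 → Fin 2 → Fin 2 → Fin 2 → ℂ)
    (hT : ∀ i j l o, conj (T i j l o) = T l o i j)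
    (B1 : Fin 2 → Fin 2 → ℂ) (B2 B3 : Fin 2 → ℂ)
    (hdeg : ∀ p : Fin 3 → ℂ,
      Tendsto (fun t : ℝ =>
          (wirtHess (Fc ε k m A1 A2 P Q R S T B1 B2 B3) (t • p)).det / (t : ℂ) ^ 2)
        (𝓝[≠] (0 : ℝ)) (𝓝 0)) :
    (∀ z : Fin 2 → ℂ, ∑ i, A1 i * z i = 0) ∧
    A2 = 0 ∧
    (∀ z : Fin 2 → ℂ, ∑ i, ∑ j, B1 i j * z i * z j = 0) ∧
    (∀ z : Fin 2 → ℂ, ∑ i, B2 i * z i = 0) ∧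
    (∀ z : Fin 2 → ℂ, ∑ i, B3 i * z i = 0) ∧
    (∀ z : Fin 2 → ℂ, ∑ i, ∑ j, S i j * z i * conj (z j)
        = 4 * ((k : ℂ) ^ 2 * z 0 * conj (z 0) + (ε : ℂ) * (m : ℂ) ^ 2 * z 1 * conj (z 1))) := by
  have hinv : (ε : ℂ)⁻¹ = ε := by rcases hε with rfl | rfl <;> simp
  simpa only [hinv] using stmt_1_general (by rcases hε with rfl | rfl <;> norm_num) hdeg
end

section
/- Let ⟨·,·⟩ be a nondegenerate Hermitian form on ℂ², let K and K̃ be complex quadratic forms on ℂ², and let Γ = {(z, ζ, w) ∈ ℂ²×ℂ×ℂ : Im w = ⟨z, z̄⟩ + 2Re(K(z,z)·conj(ζ)) + E(z, ζ, Re w)} and Γ̃ = {(z, ζ, w) : Im w = ⟨z, z̄⟩ + 2Re(K̃(z,z)·conj(ζ)) + Ẽ(z, ζ, Re w)}, where E, Ẽ are real-analytic real-valued functions near 0 of weighted order ≥ 4 (weights [z₁]=[z₂]=[ζ]=1, [u]=2, i.e. E(tz, tζ, t²u)/t³ → 0 as t → 0 for all fixed (z, ζ, u) near 0, and likewise for Ẽ).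 Let Φ = (f, g, h) (with f ℂ²-valued and g, h ℂ-valued) be holomorphic on a neighborhood U of 0 in ℂ⁴, with Φ(0) = 0, invertible derivative DΦ(0), and Φ(Γ ∩ U) ⊆ Γ̃. Then: ∂f/∂ζ(0) = 0; ∂h/∂z₁(0) = ∂h/∂z₂(0) = ∂h/∂ζ(0) = 0; all second-order partial derivatives of h at 0 with respect to the variables (z₁, z₂, ζ) vanish; ρ := ∂h/∂w(0) is a nonzero real number; the matrix C := ∂f/∂z(0) ∈ GL(2, ℂ); β := ∂g/∂ζ(0) ≠ 0; and for all z ∈ ℂ²: ⟨Cz, conj(Cz)⟩ = ρ·⟨z, z̄⟩ and K̃(Cz, Cz) = (ρ/conj(β))·K(z,z). -/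
open ComplexConjugate Filter Topology

/-- Value of the Hermitian form with coefficient matrix `A` on `ℂ²`. -/
noncomputable def hermVal (A : Matrix (Fin 2) (Fin 2) ℂ) (z : Fin 2 → ℂ) : ℂ :=
  ∑ i, ∑ j, A i j * z i * conj (z j)

/-- Value of the complex quadratic form `K(z,z) = k z₁² + l z₁ z₂ + m z₂²` on `ℂ²`. -/
def quadVal (k l m : ℂ) (z : Fin 2 → ℂ) : ℂ :=
  k * z 0 ^ 2 + l * z 0 * z 1 + m * z 1 ^ 2

/-- `E` has weighted order `≥ 4` at `0` for the weights `[z] = [ζ] = 1`, `[u] = 2`: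
`E (t z, t ζ, t² u) / t³ → 0` as `t → 0`, for all `(z, ζ, u)` near `0`. -/
def wOrder4 (E : (Fin 2 → ℂ) × ℂ × ℝ → ℝ) : Prop :=
  ∀ᶠ x : (Fin 2 → ℂ) × ℂ × ℝ in 𝓝 0,
    Tendsto (fun t : ℝ => E (t • x.1, t • x.2.1, t ^ 2 * x.2.2) / t ^ 3)
      (𝓝[≠] (0 : ℝ)) (𝓝 0)

/-- The hypersurface `Im w = ⟨z, z̄⟩ + 2 Re (K(z,z) ζ̄) + E (z, ζ, Re w)` in `ℂ⁴`,
coordinates `p = (z₁, z₂, ζ, w)`. -/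
noncomputable def hyp (A : Matrix (Fin 2) (Fin 2) ℂ) (k l m : ℂ)
    (E : (Fin 2 → ℂ) × ℂ × ℝ → ℝ) : Set (Fin 4 → ℂ) :=
  {p | (p 3).im = (hermVal A ![p 0, p 1]).re
        + 2 * (quadVal k l m ![p 0, p 1] * conj (p 2)).re
        + E (![p 0, p 1], p 2, (p 3).re)}

/-- The `j`-th complex partial derivative (at every point) of a function on `ℂ⁴`. -/
noncomputable def pd (j : Fin 4) (φ : (Fin 4 → ℂ) → ℂ) : (Fin 4 → ℂ) → ℂ :=
  fun p => fderiv ℂ φ p (Pi.single j 1)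

/-!
The source hypersurface contains, for every `v = (z, ζ, 0)` and every real `u`, a curve
`X t = t v + t² (u + i ⟨z, z̄⟩) e₃ + t³ (2 i Re (K(z,z) ζ̄)) e₃ + o(t³)`. Its image has a 3-jet
given by the derivatives of `Φ` and lies in the target, whose equation therefore relates these
derivatives order by order in `t`; the weighted remainders only contribute `o(t³)`, uniformly by
Taylor's theorem.

* Order `t`: `Im h` vanishes to first order along all `v`, hence along `i v`, so `Dh(v) = 0`.
* Order `t²`: replacing `v` by `i v` preserves `⟨z, z̄⟩` and changes the sign of `D²h(v, v)`. This
  kills the holomorphic part and leaves `⟨f'(v), conj f'(v)⟩ = ρ ⟨z, z̄⟩`; varying `u` shows that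
  `ρ` is real. Polarization and nondegeneracy then give `∂f/∂ζ(0) = 0`.
* Order `t³`: at `v = c z + s e₂` the part odd in `s` involves `c² s̄`, which carries the two
  quadratic forms, `|c|² s` with its conjugate, and monomials holomorphic in `(c, s)`. Comparing
  `c` with `i c` cancels the terms in `|c|²`, and rotating `c = s` removes the holomorphic ones.
-/

section Holomorphic

open Metric

variable {E F : Type*} [NormedAddCommGroup E] [NormedSpace ℂ E]
  [NormedAddCommGroup F] [NormedSpace ℂ F]

lemma norm_fderiv_le_of_norm_le_on_ball {f : E → F} {c : E} {r C : ℝ} (hr : 0 < r)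
    (hf : DifferentiableOn ℂ f (ball c r)) (hC : ∀ z ∈ ball c r, ‖f z‖ ≤ C) :
    ‖fderiv ℂ f c‖ ≤ 2 * C / r := by
  refine Complex.norm_fderiv_le_div_of_mapsTo_ball hf (fun z hz => ?_) hr
  rw [mem_closedBall, dist_eq_norm]
  linarith [norm_sub_le (f z) (f c), hC z hz, hC c (mem_ball_self hr)]

lemma norm_sub_sub_fderiv_le_of_norm_le_on_ball {f : E → F} {c z : E} {r C : ℝ}
    (hf : DifferentiableOn ℂ f (ball c r)) (hC : ∀ z ∈ ball c r, ‖f z‖ ≤ C) (hz : z ∈ ball c r) :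
    ‖f z - f c - fderiv ℂ f c (z - c)‖ ≤ 4 * C * (‖z - c‖ / r) ^ 2 := by
  have hr : 0 < r := nonempty_ball.mp ⟨z, hz⟩
  have hfc : HasFDerivAt f (fderiv ℂ f c) c :=
    (hf.differentiableAt (ball_mem_nhds c hr)).hasFDerivAt
  let R : E → F := fun y => f y - f c - fderiv ℂ f c (y - c)
  have hRc : R c = 0 := by simp [R]
  have hR : DifferentiableOn ℂ R (ball c r) :=
    (hf.sub_const _).sub
      ((fderiv ℂ f c).differentiable.comp (differentiable_id.sub_const c)).differentiableOn
  have hmaps : Set.MapsTo R (ball c r) (closedBall (R c) (4 * C)) := fun y hy => by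
    have hlin : ‖fderiv ℂ f c (y - c)‖ ≤ 2 * C / r * r :=
      (fderiv ℂ f c).le_of_opNorm_le_of_le (norm_fderiv_le_of_norm_le_on_ball hr hf hC)
        (mem_ball_iff_norm.mp hy).le
    rw [div_mul_cancel₀ _ hr.ne'] at hlin
    rw [mem_closedBall, hRc, dist_zero_right]
    linarith [norm_sub_le (f y - f c) (fderiv ℂ f c (y - c)), norm_sub_le (f y) (f c), hC y hy,
      hC c (mem_ball_self hr)]
  have hlittle : (R · - R c) =o[𝓝 c] fun y => ‖y - c‖ ^ 1 := by
    simpa [hRc, R] using hfc.isLittleO.norm_right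
  simpa [hRc, dist_eq_norm, R] using
    Complex.dist_le_mul_div_pow_of_mapsTo_ball_of_isLittleO hR hmaps hlittle hz

lemma differentiableAt_of_tendstoUniformlyOn_ball [CompleteSpace F] {ι : Type*} {l : Filter ι}
    [l.NeBot] {G : ι → E → F} {g : E → F} {x : E} {r : ℝ} (hr : 0 < r)
    (hG : ∀ᶠ n in l, DifferentiableOn ℂ (G n) (ball x r))
    (hlim : TendstoUniformlyOn G g l (ball x r)) : DifferentiableAt ℂ g x := by
  have hnear : ∀ y ∈ ball x (r / 2), ball y (r / 2) ⊆ ball x r := fun y hy =>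
    ball_subset_ball' (by linarith [mem_ball.mp hy])
  have hcauchy : UniformCauchySeqOn (fun n => fderiv ℂ (G n)) l (ball x (r / 2)) := by
    intro V hV
    obtain ⟨ε, hε, hεV⟩ := Metric.mem_uniformity_dist.mp hV
    have hclose := hlim.uniformCauchySeqOn _
      (Metric.dist_mem_uniformity (show 0 < ε * r / 8 by positivity))
    filter_upwards [hclose, hG.prod_mk hG] with ⟨m, n⟩ hmn ⟨hm, hn⟩ y hy
    apply hεV
    have hball := ball_mem_nhds y (half_pos hr)
    have hm' := hm.mono (hnear y hy)
    have hn' := hn.mono (hnear y hy)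
    have hbound := norm_fderiv_le_of_norm_le_on_ball (half_pos hr) (hm'.sub hn')
      fun z hz => (dist_eq_norm (G m z) (G n z) ▸ hmn z (hnear y hy hz)).le
    rw [fderiv_sub (hm'.differentiableAt hball) (hn'.differentiableAt hball)] at hbound
    calc dist (fderiv ℂ (G m) y) (fderiv ℂ (G n) y) ≤ 2 * (ε * r / 8) / (r / 2) := by
          rwa [dist_eq_norm]
      _ = ε / 2 := by field_simp; norm_num
      _ < ε := half_lt_self hε
  choose! g' hg' using fun y (hy : y ∈ ball x (r / 2)) =>
    cauchy_map_iff_exists_tendsto.mp (hcauchy.cauchy_map hy)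
  have hunif := hcauchy.tendstoUniformlyOn_of_tendsto hg'
  have hderiv : ∀ᶠ p : ι × E in l ×ˢ 𝓝 x, HasFDerivAt (G p.1) (fderiv ℂ (G p.1) p.2) p.2 := by
    filter_upwards [hG.prod_mk (ball_mem_nhds x hr)] with ⟨n, y⟩ ⟨hn, hy⟩
    exact (hn.differentiableAt (isOpen_ball.mem_nhds hy)).hasFDerivAt
  refine (hasFDerivAt_of_tendstoUniformlyOnFilter (f' := fun n => fderiv ℂ (G n)) (g' := g')
    ?_ hderiv ?_).differentiableAt
  · exact (tendstoUniformlyOn_iff_tendstoUniformlyOnFilter.mp hunif).mono_right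
      (le_principal_iff.mpr (ball_mem_nhds x (half_pos hr)))
  · filter_upwards [ball_mem_nhds x hr] with y hy using hlim.tendsto_at hy

lemma tendstoUniformlyOn_differenceQuotient {f : E → F} {x : E} {r C : ℝ} (hr : 0 < r)
    (hf : DifferentiableOn ℂ f (ball x (2 * r))) (hC : ∀ z ∈ ball x (2 * r), ‖f z‖ ≤ C) (v : E) :
    TendstoUniformlyOn (fun (h : ℂ) z => h⁻¹ • (f (z + h • v) - f z)) (fun z => fderiv ℂ f z v)
      (𝓝[≠] 0) (ball x r) := by
  have herr : Tendsto (fun h : ℂ => ‖h‖ * (4 * C * (‖v‖ / r) ^ 2)) (𝓝[≠] 0) (𝓝 0) :=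
    ((continuous_norm.mul continuous_const).tendsto' 0 0 (by simp)).mono_left nhdsWithin_le_nhds
  have hsmall : ∀ᶠ h : ℂ in 𝓝[≠] 0, ‖h • v‖ < r :=
    ((show Continuous fun h : ℂ => ‖h • v‖ by fun_prop).tendsto' 0 0 (by simp)).mono_left
      nhdsWithin_le_nhds |>.eventually_lt_const hr
  rw [Metric.tendstoUniformlyOn_iff]
  intro ε hε
  filter_upwards [herr.eventually_lt_const hε, hsmall, self_mem_nhdsWithin] with h herr hhv hh z hz
  have hsub : ball z r ⊆ ball x (2 * r) := ball_subset_ball' (by linarith [mem_ball.mp hz])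
  have hTaylor := norm_sub_sub_fderiv_le_of_norm_le_on_ball (hf.mono hsub)
    (fun y hy => hC y (hsub hy)) (z := z + h • v) (by simpa using hhv)
  have hh' : h ≠ 0 := hh
  have hid : h⁻¹ • (f (z + h • v) - f z) - fderiv ℂ f z v
      = h⁻¹ • (f (z + h • v) - f z - fderiv ℂ f z (z + h • v - z)) := by
    rw [add_sub_cancel_left, map_smul, smul_sub _ (f (z + h • v) - f z), inv_smul_smul₀ hh']
  calc dist (fderiv ℂ f z v) (h⁻¹ • (f (z + h • v) - f z))
      ≤ ‖h‖⁻¹ * (4 * C * (‖h‖ * ‖v‖ / r) ^ 2) := by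
        rw [dist_comm, dist_eq_norm, hid, norm_smul, norm_inv]
        gcongr
        simpa [norm_smul] using hTaylor
    _ = ‖h‖ * (4 * C * (‖v‖ / r) ^ 2) := by
        have := norm_ne_zero_iff.mpr hh'
        field_simp
    _ < ε := herr

lemma differentiableOn_fderiv_apply [CompleteSpace F] {f : E → F} {U : Set E} (hU : IsOpen U)
    (hf : DifferentiableOn ℂ f U) (v : E) : DifferentiableOn ℂ (fun z => fderiv ℂ f z v) U := by
  intro x hx
  have hbdd : ∀ᶠ z in 𝓝 x, z ∈ U ∧ ‖f z‖ < ‖f x‖ + 1 :=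
    Eventually.and (hU.mem_nhds hx)
      ((hf.differentiableAt (hU.mem_nhds hx)).continuousAt.norm.eventually_lt_const (lt_add_one _))
  obtain ⟨r, hr, hball⟩ := Metric.eventually_nhds_iff_ball.mp hbdd
  have hr' : 0 < r / 2 := half_pos hr
  have hfball : DifferentiableOn ℂ f (ball x (2 * (r / 2))) :=
    hf.mono fun z hz => (hball z (by simpa [mul_div_cancel₀] using hz)).1
  refine (differentiableAt_of_tendstoUniformlyOn_ball hr' ?_
    (tendstoUniformlyOn_differenceQuotient hr' hfball
      (fun z hz => (hball z (by simpa [mul_div_cancel₀] using hz)).2.le) v)).differentiableWithinAt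
  have hsmall : ∀ᶠ h : ℂ in 𝓝[≠] 0, ‖h • v‖ < r / 2 :=
    ((show Continuous fun h : ℂ => ‖h • v‖ by fun_prop).tendsto' 0 0 (by simp)).mono_left
      nhdsWithin_le_nhds |>.eventually_lt_const hr'
  filter_upwards [hsmall] with h hh
  have hshift : Set.MapsTo (fun z => z + h • v) (ball x (r / 2)) (ball x (2 * (r / 2))) :=
    fun z hz => by
      rw [mem_ball, two_mul]
      exact (dist_triangle _ z _).trans_lt (by simpa using add_lt_add hh hz)
  refine DifferentiableOn.const_smul (.sub ?_ ?_) _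
  · exact hfball.comp (differentiable_id.add_const _).differentiableOn hshift
  · exact hfball.mono (ball_subset_ball (by linarith))

lemma contDiffOn_of_differentiableOn_complex [FiniteDimensional ℂ E] [CompleteSpace F] {f : E → F}
    {U : Set E} (hU : IsOpen U) (hf : DifferentiableOn ℂ f U) (n : ℕ) : ContDiffOn ℂ n f U := by
  induction n generalizing f with
  | zero => exact contDiffOn_zero.mpr hf.continuousOn
  | succ n ih =>
    refine contDiffOn_succ_of_fderiv_apply hf (fun h => (WithTop.natCast_ne_top n h).elim)
      fun v => ?_
    refine (ih (differentiableOn_fderiv_apply hU hf v)).congr fun z hz => ?_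
    rw [fderivWithin_of_isOpen hU hz]

lemma contDiffAt_of_differentiableOn_complex [FiniteDimensional ℂ E] [CompleteSpace F] {f : E → F}
    {U : Set E} {x : E} (hU : U ∈ 𝓝 x) (hf : DifferentiableOn ℂ f U) (n : ℕ) :
    ContDiffAt ℂ n f x :=
  (contDiffOn_of_differentiableOn_complex isOpen_interior (hf.mono interior_subset) n).contDiffAt
    (interior_mem_nhds.mpr hU)

end Holomorphic

section Taylor

open Asymptotics
open scoped Nat

variable {E F : Type*} [NormedAddCommGroup E] [NormedSpace ℝ E]
  [NormedAddCommGroup F] [NormedSpace ℝ F]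

lemma isBigO_sub_sum_iteratedFDeriv [CompleteSpace F] {f : E → F} {x₀ : E} {n : ℕ}
    (hf : ContDiffAt ℝ (n + 1) f x₀) :
    (fun p : E × E => f (p.1 + p.2) -
        ∑ k ∈ Finset.range (n + 1), (k ! : ℝ)⁻¹ • iteratedFDeriv ℝ k f p.1 fun _ => p.2)
      =O[𝓝 (x₀, 0)] fun p => ‖p.2‖ ^ (n + 1) := by
  obtain ⟨C, hC⟩ : ∃ C, ∀ᶠ x in 𝓝 x₀, ‖iteratedFDeriv ℝ (n + 1) f x‖ < C :=
    ⟨_, (hf.continuousAt_iteratedFDeriv le_rfl).norm.eventually_lt_const (lt_add_one _)⟩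
  obtain ⟨r, hr, hball⟩ := Metric.eventually_nhds_iff_ball.mp
    ((hf.eventually (by exact_mod_cast WithTop.coe_ne_top)).and hC)
  have hnear : ∀ᶠ p : E × E in 𝓝 (x₀, 0), ‖p.1 - x₀‖ + ‖p.2‖ < r :=
    ContinuousAt.eventually_lt (by fun_prop) continuousAt_const (by simpa using hr)
  refine .of_bound ((n ! : ℝ)⁻¹ * C) ?_
  filter_upwards [hnear] with ⟨x, y⟩ hxy
  have hseg : ∀ t ∈ Set.Icc (0 : ℝ) 1, x + t • y ∈ Metric.ball x₀ r := fun t ht => by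
    have hty : ‖t • y‖ ≤ ‖y‖ := by
      rw [norm_smul, Real.norm_of_nonneg ht.1]
      exact mul_le_of_le_one_left (norm_nonneg y) ht.2
    rw [mem_ball_iff_norm, add_sub_right_comm]
    exact (norm_add_le _ _).trans_lt ((add_le_add_right hty _).trans_lt hxy)
  have hint : ‖∫ t in (0 : ℝ)..1,
      (1 - t) ^ n • iteratedFDeriv ℝ (n + 1) f (x + t • y) fun _ => y‖ ≤ C * ‖y‖ ^ (n + 1) := by
    refine (intervalIntegral.norm_integral_le_of_norm_le_const fun t ht => ?_).trans_eq
      (by rw [sub_zero, abs_one, mul_one])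
    rw [Set.uIoc_of_le zero_le_one] at ht
    rw [norm_smul, norm_pow, Real.norm_of_nonneg (sub_nonneg.mpr ht.2)]
    refine (mul_le_of_le_one_left (norm_nonneg _)
      (pow_le_one₀ (sub_nonneg.mpr ht.2) (by linarith [ht.1]))).trans ?_
    simpa using (iteratedFDeriv ℝ (n + 1) f (x + t • y)).le_of_opNorm_le
      (m := fun _ => y) (hball _ (hseg t ⟨ht.1.le, ht.2⟩)).2.le
  rw [map_add_eq_sum_add_integral_iteratedFDeriv fun t ht => (hball _ (hseg t ht)).1,
    add_sub_cancel_left, norm_smul, norm_inv, RCLike.norm_natCast, norm_pow, norm_norm, mul_assoc]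
  gcongr

lemma eq_zero_of_sum_pow_smul_isLittleO {a : ℕ → F} {n : ℕ}
    (h : (fun t : ℝ => ∑ k ∈ Finset.range (n + 1), t ^ k • a k) =o[𝓝[≠] 0] fun t => t ^ n) :
    ∀ k ≤ n, a k = 0 := by
  induction n generalizing a with
  | zero => simpa [isLittleO_one_iff, tendsto_const_nhds_iff] using h
  | succ n ih =>
    have ha₀ : a 0 = 0 := by
      refine tendsto_nhds_unique (f := fun t : ℝ => ∑ k ∈ Finset.range (n + 2), t ^ k • a k)
        (l := 𝓝[≠] 0) ?_ (h.trans_tendsto ?_)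
      · refine Tendsto.mono_left (Continuous.tendsto' (by fun_prop) _ _ ?_) nhdsWithin_le_nhds
        simp [Finset.sum_range_succ']
      · exact (Continuous.tendsto' (by fun_prop) _ _ (by simp)).mono_left nhdsWithin_le_nhds
    have hshift : (fun t : ℝ => ∑ k ∈ Finset.range (n + 1), t ^ k • a (k + 1))
        =o[𝓝[≠] 0] fun t => t ^ n := by
      refine ((isBigO_refl (fun t : ℝ => t⁻¹) _).smul_isLittleO h).congr' ?_ ?_ <;>
        filter_upwards [self_mem_nhdsWithin] with t (ht : t ≠ 0)
      · rw [Finset.sum_range_succ', ha₀, smul_zero, add_zero, Finset.smul_sum]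
        simp only [pow_succ', mul_smul, inv_smul_smul₀ ht]
      · rw [pow_succ', smul_eq_mul, inv_mul_cancel_left₀ ht]
    rintro (_ | k) hk
    · exact ha₀
    · exact ih hshift k (Nat.le_of_succ_le_succ hk)

lemma isBigO_sub_sum_pow_smul_iteratedFDeriv_left [CompleteSpace F] {H : ℝ × E → F} {x : E}
    {n : ℕ} (hH : ContDiffAt ℝ (n + 1) H (0, x)) :
    (fun p : ℝ × E => H p - ∑ k ∈ Finset.range (n + 1),
        p.1 ^ k • (k ! : ℝ)⁻¹ • iteratedFDeriv ℝ k H (0, p.2) fun _ => (1, 0))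
      =O[𝓝 (0, x)] fun p => p.1 ^ (n + 1) := by
  have hdir : Tendsto (fun p : ℝ × E => (((0 : ℝ), p.2), (p.1, (0 : E))))
      (𝓝 (0, x)) (𝓝 ((0, x), 0)) := Continuous.tendsto' (by fun_prop) _ _ rfl
  refine .of_norm_right (((isBigO_sub_sum_iteratedFDeriv hH).comp_tendsto hdir).congr
    (fun p => ?_) (fun p => ?_))
  · have hsmul : (p.1, (0 : E)) = p.1 • (1, 0) := by simp
    simp only [Function.comp_apply, smul_comm (p.1 ^ _)]
    rw [hsmul]
    simp only [ContinuousMultilinearMap.map_smul_univ, Finset.prod_const, Finset.card_univ,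
      Fintype.card_fin]
    rw [← hsmul, Prod.mk_add_mk, zero_add, add_zero]
  · simp

/- Pointwise vanishing of the Taylor coefficients in `t` leaves only the Taylor remainder, which is
controlled uniformly in the parameter. -/
lemma isBigO_pow_succ_of_eventually_isLittleO_pow [CompleteSpace F] {H : ℝ × E → F} {x₀ : E}
    {n : ℕ} (hH : ContDiffAt ℝ (n + 1) H (0, x₀))
    (hpt : ∀ᶠ x in 𝓝 x₀, (fun t => H (t, x)) =o[𝓝[≠] 0] fun t => t ^ n) :
    H =O[𝓝 (0, x₀)] fun p => p.1 ^ (n + 1) := by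
  let T : ℕ → E → F := fun k x => (k ! : ℝ)⁻¹ • iteratedFDeriv ℝ k H (0, x) fun _ => (1, 0)
  have hT : ∀ᶠ x in 𝓝 x₀, ∀ k ≤ n, T k x = 0 := by
    have hbase : Tendsto (fun x : E => ((0 : ℝ), x)) (𝓝 x₀) (𝓝 (0, x₀)) :=
      (Continuous.prodMk_right 0).tendsto x₀
    have hHnear := hH.eventually (by exact_mod_cast WithTop.coe_ne_top)
    filter_upwards [hpt, hbase.eventually hHnear] with x hx hHx
    have hline : Tendsto (fun t : ℝ => (t, x)) (𝓝[≠] 0) (𝓝 (0, x)) :=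
      (Continuous.prodMk_left x).tendsto' 0 _ rfl |>.mono_left nhdsWithin_le_nhds
    have hrem := ((isBigO_sub_sum_pow_smul_iteratedFDeriv_left hHx).comp_tendsto
      hline).trans_isLittleO ((isLittleO_pow_pow n.lt_succ_self).mono nhdsWithin_le_nhds)
    refine eq_zero_of_sum_pow_smul_isLittleO ((hx.sub hrem).congr_left fun t => ?_)
    simp [T]
  refine (isBigO_sub_sum_pow_smul_iteratedFDeriv_left hH).congr' ?_ .rfl
  filter_upwards [(continuous_snd.tendsto ((0 : ℝ), x₀)).eventually hT] with p hp
  rw [Finset.sum_eq_zero fun k hk => ?_, sub_zero]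
  exact (congrArg _ (hp k (Nat.lt_succ_iff.mp (Finset.mem_range.mp hk)))).trans (smul_zero _)

end Taylor

section WeightedOrder

open Asymptotics

/-- The anisotropic dilation of `ℂ² × ℂ × ℝ` with weights `(1, 1, 2)`, through which `wOrder4` is
defined. -/
noncomputable def weightedDilation (t : ℝ) (x : (Fin 2 → ℂ) × ℂ × ℝ) : (Fin 2 → ℂ) × ℂ × ℝ :=
  (t • x.1, t • x.2.1, t ^ 2 * x.2.2)

@[fun_prop]
lemma contDiff_weightedDilation {n : WithTop ℕ∞} :
    ContDiff ℝ n fun p : ℝ × ((Fin 2 → ℂ) × ℂ × ℝ) => weightedDilation p.1 p.2 := by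
  unfold weightedDilation
  fun_prop

lemma weightedDilation_zero_left (x : (Fin 2 → ℂ) × ℂ × ℝ) : weightedDilation 0 x = 0 := by
  simp [weightedDilation]

lemma weightedDilation_mul (s t : ℝ) (x : (Fin 2 → ℂ) × ℂ × ℝ) :
    weightedDilation (s * t) x = weightedDilation s (weightedDilation t x) := by
  simp only [weightedDilation, mul_smul, mul_pow, mul_assoc]

variable {E : (Fin 2 → ℂ) × ℂ × ℝ → ℝ}

lemma wOrder4.isLittleO_comp_weightedDilation (hE : wOrder4 E) (x : (Fin 2 → ℂ) × ℂ × ℝ) :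
    (fun t : ℝ => E (weightedDilation t x)) =o[𝓝[≠] 0] fun t => t ^ 3 := by
  have hcont : Tendsto (fun s : ℝ => weightedDilation s x) (𝓝[≠] 0) (𝓝 0) :=
    ((contDiff_weightedDilation (n := 0)).continuous.comp (Continuous.prodMk_left x)).tendsto' 0 0
      (weightedDilation_zero_left x) |>.mono_left nhdsWithin_le_nhds
  obtain ⟨s, hs, hs₀ : s ≠ 0⟩ := ((hcont.eventually hE).and self_mem_nhdsWithin).exists
  have hscale : Tendsto (fun t : ℝ => t / s) (𝓝[≠] 0) (𝓝[≠] 0) :=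
    tendsto_nhdsWithin_of_tendsto_nhds_of_eventually_within _
      ((continuous_id.div_const s).tendsto' 0 0 (zero_div s) |>.mono_left nhdsWithin_le_nhds)
      (by filter_upwards [self_mem_nhdsWithin] with t ht using div_ne_zero ht hs₀)
  have hlittle : (fun t : ℝ => E (weightedDilation t (weightedDilation s x)))
      =o[𝓝[≠] 0] fun t => t ^ 3 := by
    refine (isLittleO_iff_tendsto' ?_).mpr hs
    filter_upwards [self_mem_nhdsWithin] with t (ht : t ≠ 0) h₀
    exact absurd h₀ (pow_ne_zero 3 ht)
  refine ((hlittle.comp_tendsto hscale).congr_left fun t => ?_).trans_isBigO ?_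
  · simp only [Function.comp_apply, ← weightedDilation_mul, div_mul_cancel₀ t hs₀]
  · simpa only [Function.comp_def, div_eq_inv_mul, mul_pow, inv_pow] using
      isBigO_const_mul_self (s ^ 3)⁻¹ (fun t : ℝ => t ^ 3) _

lemma wOrder4.isBigO_comp_weightedDilation (hE : wOrder4 E) (hEd : ContDiffAt ℝ 4 E 0)
    (x₀ : (Fin 2 → ℂ) × ℂ × ℝ) :
    (fun p : ℝ × ((Fin 2 → ℂ) × ℂ × ℝ) => E (weightedDilation p.1 p.2))
      =O[𝓝 (0, x₀)] fun p => p.1 ^ 4 := by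
  refine isBigO_pow_succ_of_eventually_isLittleO_pow (n := 3) ?_
    (.of_forall hE.isLittleO_comp_weightedDilation)
  refine ContDiffAt.comp (0, x₀) (g := E) ?_ contDiff_weightedDilation.contDiffAt
  rw [weightedDilation_zero_left]
  exact hEd

lemma wOrder4.tendsto_comp_weightedDilation_div (hE : wOrder4 E) (hEd : ContDiffAt ℝ 4 E 0)
    {y : ℝ → (Fin 2 → ℂ) × ℂ × ℝ} {x₀ : (Fin 2 → ℂ) × ℂ × ℝ}
    (hy : Tendsto y (𝓝[≠] 0) (𝓝 x₀)) :
    Tendsto (fun t => E (weightedDilation t (y t)) / t ^ 3) (𝓝[≠] 0) (𝓝 0) := by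
  have hpair : Tendsto (fun t => (t, y t)) (𝓝[≠] 0) (𝓝 (0, x₀)) :=
    (tendsto_id.mono_left nhdsWithin_le_nhds).prodMk_nhds hy
  exact (((hE.isBigO_comp_weightedDilation hEd x₀).comp_tendsto hpair).trans_isLittleO
    ((isLittleO_pow_pow (by norm_num : 3 < 4)).mono nhdsWithin_le_nhds)).tendsto_div_nhds_zero

lemma wOrder4.apply_zero (hE : wOrder4 E) : E 0 = 0 := by
  have h := hE.isLittleO_comp_weightedDilation 0
  have hdil : ∀ t, weightedDilation t 0 = 0 := fun t => by simp [weightedDilation]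
  simp only [hdil] at h
  have hzero : Tendsto (fun t : ℝ => t ^ 3) (𝓝[≠] 0) (𝓝 0) :=
    (Continuous.tendsto' (by fun_prop) _ _ (by simp)).mono_left nhdsWithin_le_nhds
  exact tendsto_const_nhds_iff.mp (h.trans_tendsto hzero)

lemma wOrder4.hasFDerivAt (hE : wOrder4 E) (hEd : ContDiffAt ℝ 4 E 0) :
    HasFDerivAt E (0 : (Fin 2 → ℂ) × ℂ × ℝ →L[ℝ] ℝ) 0 := by
  have hdiff := (hEd.differentiableAt (by norm_num)).hasFDerivAt
  set L := fderiv ℝ E 0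
  have hvanish : ∀ {v : (Fin 2 → ℂ) × ℂ × ℝ} {n : ℕ}, n ≠ 0 → n < 3 →
      (∀ t : ℝ, weightedDilation t v = t ^ n • v) → L v = 0 := fun {v n} hn₀ hn hv => by
    have hline : HasLineDerivAt ℝ E (L v) 0 v := hdiff.hasLineDerivAt v
    have hpow : Tendsto (fun t : ℝ => t ^ n) (𝓝[≠] 0) (𝓝[≠] 0) :=
      tendsto_nhdsWithin_of_tendsto_nhds_of_eventually_within _
        ((continuous_pow n).tendsto' 0 0 (zero_pow hn₀) |>.mono_left nhdsWithin_le_nhds)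
        (by filter_upwards [self_mem_nhdsWithin] with t ht using pow_ne_zero n ht)
    have hsmall := ((hE.isLittleO_comp_weightedDilation v).trans
      ((isLittleO_pow_pow hn).mono nhdsWithin_le_nhds)).tendsto_div_nhds_zero
    refine tendsto_nhds_unique (hline.tendsto_slope_zero.comp hpow) (hsmall.congr fun t => ?_)
    simp [hv, hE.apply_zero, div_eq_inv_mul]
  have hL : L = 0 := by
    refine ContinuousLinearMap.ext fun v => ?_
    have hv : v = (v.1, v.2.1, 0) + (0, 0, v.2.2) := by simp
    rw [hv, map_add, hvanish (n := 1) (by norm_num) (by norm_num) fun t => by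
        simp [weightedDilation], hvanish (n := 2) (by norm_num) (by norm_num) fun t => by
        simp [weightedDilation], add_zero, zero_apply]
  rwa [hL] at hdiff

end WeightedOrder

section ThreeJet

open Asymptotics

variable {E F : Type*} [NormedAddCommGroup E] [NormedSpace ℝ E]
  [NormedAddCommGroup F] [NormedSpace ℝ F]

/-- `X t = t a + t² b + t³ c + o(t³)` as `t → 0`: the curve `X` passes through the origin with
3-jet `(a, b, c)`. The error term is absorbed into the coefficient of `t³`, and the value at `t = 0`
is ignored. -/
def HasThreeJet (X : ℝ → E) (a b c : E) : Prop :=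
  ∃ r : ℝ → E, Tendsto r (𝓝[≠] 0) (𝓝 c) ∧
    ∀ᶠ t in 𝓝[≠] 0, X t = t • a + t ^ 2 • b + t ^ 3 • r t

lemma HasThreeJet.exists_iterated_quotients {X : ℝ → E} {a b c : E} (hX : HasThreeJet X a b c) :
    ∃ y d r : ℝ → E, Tendsto y (𝓝[≠] 0) (𝓝 a) ∧ Tendsto d (𝓝[≠] 0) (𝓝 b) ∧
      Tendsto r (𝓝[≠] 0) (𝓝 c) ∧
      ∀ᶠ t in 𝓝[≠] 0, X t = t • y t ∧ y t = a + t • d t ∧ d t = b + t • r t := by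
  obtain ⟨r, hr, hXr⟩ := hX
  have ht : Tendsto (fun t : ℝ => t) (𝓝[≠] 0) (𝓝 0) := tendsto_id.mono_left nhdsWithin_le_nhds
  have hd : Tendsto (fun t => b + t • r t) (𝓝[≠] 0) (𝓝 b) := by
    simpa using (ht.smul hr).const_add b
  have hy : Tendsto (fun t => a + t • (b + t • r t)) (𝓝[≠] 0) (𝓝 a) := by
    simpa only [zero_smul, add_zero] using (ht.smul hd).const_add a
  refine ⟨_, _, r, hy, hd, hr, hXr.mono fun t htX => ⟨?_, rfl, rfl⟩⟩
  rw [htX]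
  module

lemma HasThreeJet.tendsto {X : ℝ → E} {a b c : E} (hX : HasThreeJet X a b c) :
    Tendsto X (𝓝[≠] 0) (𝓝 0) := by
  obtain ⟨y, _, _, hy, -, -, hXy⟩ := hX.exists_iterated_quotients
  have hlim := (tendsto_id.mono_left nhdsWithin_le_nhds).smul hy
  rw [zero_smul] at hlim
  exact hlim.congr' (hXy.mono fun t h => h.1.symm)

lemma isBigO_sub_taylor_three [CompleteSpace F] {φ : E → F} (hφ : ContDiffAt ℝ 4 φ 0)
    (hφ₀ : φ 0 = 0) :
    (fun y => φ y - (fderiv ℝ φ 0 y + (2⁻¹ : ℝ) • fderiv ℝ (fderiv ℝ φ) 0 y y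
      + (6⁻¹ : ℝ) • iteratedFDeriv ℝ 3 φ 0 fun _ => y)) =O[𝓝 0] fun y => ‖y‖ ^ 4 := by
  have hdir : Tendsto (fun y : E => ((0 : E), y)) (𝓝 0) (𝓝 (0, 0)) :=
    (Continuous.prodMk_right 0).tendsto 0
  refine ((isBigO_sub_sum_iteratedFDeriv (n := 3) hφ).comp_tendsto hdir).congr_left fun y => ?_
  simp [Finset.sum_range_succ, iteratedFDeriv_two_apply, hφ₀, Nat.factorial]

lemma tendsto_inv_pow_smul_sub_taylor_three [CompleteSpace F] {φ : E → F} {y : ℝ → E} {a : E}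
    (hφ : ContDiffAt ℝ 4 φ 0) (hφ₀ : φ 0 = 0) (hy : Tendsto y (𝓝[≠] 0) (𝓝 a)) :
    Tendsto (fun t : ℝ => (t ^ 3)⁻¹ • (φ (t • y t) - (fderiv ℝ φ 0 (t • y t)
      + (2⁻¹ : ℝ) • fderiv ℝ (fderiv ℝ φ) 0 (t • y t) (t • y t)
      + (6⁻¹ : ℝ) • iteratedFDeriv ℝ 3 φ 0 fun _ => t • y t))) (𝓝[≠] 0) (𝓝 0) := by
  have hty : Tendsto (fun t => t • y t) (𝓝[≠] 0) (𝓝 0) := by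
    simpa using (tendsto_id.mono_left nhdsWithin_le_nhds).smul hy
  have hbound : (fun t => ‖t • y t‖ ^ 4) =O[𝓝[≠] 0] fun t : ℝ => t ^ 4 := by
    simpa using ((isBigO_refl (fun t : ℝ => t) _).smul (hy.isBigO_one ℝ)).norm_left.pow 4
  exact (((isBigO_sub_taylor_three hφ hφ₀).comp_tendsto hty).trans hbound).trans_isLittleO
    ((isLittleO_pow_pow (by norm_num : 3 < 4)).mono nhdsWithin_le_nhds)
    |>.tendsto_inv_smul_nhds_zero

lemma HasThreeJet.comp [CompleteSpace F] {φ : E → F} {X : ℝ → E} {a b c : E}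
    (hφ : ContDiffAt ℝ 4 φ 0) (hφ₀ : φ 0 = 0) (hX : HasThreeJet X a b c) :
    HasThreeJet (φ ∘ X) (fderiv ℝ φ 0 a)
      (fderiv ℝ φ 0 b + (2⁻¹ : ℝ) • fderiv ℝ (fderiv ℝ φ) 0 a a)
      (fderiv ℝ φ 0 c + fderiv ℝ (fderiv ℝ φ) 0 a b
        + (6⁻¹ : ℝ) • iteratedFDeriv ℝ 3 φ 0 fun _ => a) := by
  obtain ⟨y, d, r, hy, hd, hr, hXy⟩ := hX.exists_iterated_quotients
  have hR := tendsto_inv_pow_smul_sub_taylor_three hφ hφ₀ hy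
  set L := fderiv ℝ φ 0
  set Q := fderiv ℝ (fderiv ℝ φ) 0
  let P : E → F := fun v => iteratedFDeriv ℝ 3 φ 0 fun _ => v
  have hP : Continuous P := by
    dsimp only [P]
    fun_prop
  have hPsmul (t : ℝ) (v : E) : P (t • v) = t ^ 3 • P v := by
    simpa using (iteratedFDeriv ℝ 3 φ 0).map_smul_univ (fun _ => t) (fun _ => v)
  have hQsymm : Q b a = Q a b :=
    hφ.isSymmSndFDerivAt (by norm_num [minSmoothness_of_isRCLikeNormedField]) b a
  set R : E → F := fun y => φ y - (L y + (2⁻¹ : ℝ) • Q y y + (6⁻¹ : ℝ) • P y) with hRdef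
  change Tendsto (fun t : ℝ => (t ^ 3)⁻¹ • R (t • y t)) _ _ at hR
  refine ⟨fun t => L (r t) + (2⁻¹ : ℝ) • (Q a (d t) + Q (d t) (y t)) + (6⁻¹ : ℝ) • P (y t)
    + (t ^ 3)⁻¹ • R (t • y t), ?_, ?_⟩
  · have hQd := (((Q a).continuous.tendsto b).comp hd).add
      ((Q.continuous₂.tendsto (b, a)).comp (hd.prodMk_nhds hy))
    have hlim := (((L.continuous.tendsto c).comp hr).add (hQd.const_smul (2⁻¹ : ℝ))).add
      (((hP.tendsto a).comp hy).const_smul (6⁻¹ : ℝ)) |>.add hR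
    convert! hlim using 2
    rw [Function.uncurry_apply_pair, hQsymm]
    module
  · filter_upwards [hXy, self_mem_nhdsWithin] with t ⟨htX, hty, htd⟩ (ht₀ : t ≠ 0)
    have hφX : φ (X t) = L (t • y t) + (2⁻¹ : ℝ) • Q (t • y t) (t • y t)
        + t ^ 3 • (6⁻¹ : ℝ) • P (y t) + t ^ 3 • (t ^ 3)⁻¹ • R (t • y t) := by
      rw [smul_inv_smul₀ (pow_ne_zero 3 ht₀), smul_comm, ← hPsmul, hRdef, htX]
      exact (add_sub_cancel _ _).symm
    rw [Function.comp_apply, hφX]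
    nth_rw 1 2 [hty, htd]
    simp only [hty, htd, map_add, map_smul, add_apply, smul_apply, smul_add]
    module

end ThreeJet

section ComplexThreeJet

variable {E F : Type*}
  [NormedAddCommGroup E] [NormedSpace ℝ E] [NormedSpace ℂ E] [IsScalarTower ℝ ℂ E]
  [NormedAddCommGroup F] [NormedSpace ℝ F] [NormedSpace ℂ F] [IsScalarTower ℝ ℂ F]

lemma iteratedFDeriv_real_apply_eq_complex {n : ℕ} {φ : E → F} {x : E} (hφ : ContDiffAt ℂ n φ x)
    (m : Fin n → E) : iteratedFDeriv ℝ n φ x m = iteratedFDeriv ℂ n φ x m := by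
  rw [← hφ.restrictScalars_iteratedFDeriv (𝕜 := ℝ)]
  rfl

lemma HasThreeJet.comp_holomorphic [CompleteSpace F] {φ : E → F} {X : ℝ → E} {a b c : E}
    (hφ : ContDiffAt ℂ 4 φ 0) (hφ₀ : φ 0 = 0) (hX : HasThreeJet X a b c) :
    HasThreeJet (φ ∘ X) (fderiv ℂ φ 0 a)
      (fderiv ℂ φ 0 b + (2⁻¹ : ℝ) • fderiv ℂ (fderiv ℂ φ) 0 a a)
      (fderiv ℂ φ 0 c + fderiv ℂ (fderiv ℂ φ) 0 a b
        + (6⁻¹ : ℝ) • iteratedFDeriv ℂ 3 φ 0 fun _ => a) := by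
  have hD (v : E) : fderiv ℝ φ 0 v = fderiv ℂ φ 0 v := by
    rw [(hφ.differentiableAt (by norm_num)).fderiv_restrictScalars ℝ]
    rfl
  have hD2 (v w : E) : fderiv ℝ (fderiv ℝ φ) 0 v w = fderiv ℂ (fderiv ℂ φ) 0 v w := by
    simpa [iteratedFDeriv_two_apply] using iteratedFDeriv_real_apply_eq_complex
      (hφ.of_le (by norm_num : ((2 : ℕ) : WithTop ℕ∞) ≤ 4)) ![v, w]
  have hD3 := iteratedFDeriv_real_apply_eq_complex
    (hφ.of_le (by norm_num : ((3 : ℕ) : WithTop ℕ∞) ≤ 4)) fun _ => a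
  simpa only [hD, hD2, hD3] using hX.comp (hφ.restrict_scalars ℝ) hφ₀

end ComplexThreeJet

section Sesquilinear

lemma sesquilinear_eq_zero_of_forall_diag_eq_zero {V : Type*} [AddCommGroup V] [Module ℂ V]
    {B : V →ₗ[ℂ] V →ₗ⋆[ℂ] ℂ} {p : Submodule ℂ V} (hB : ∀ v ∈ p, B v v = 0) {v w : V} (hv : v ∈ p)
    (hw : w ∈ p) : B v w = 0 := by
  have hadd := hB (v + w) (p.add_mem hv hw)
  have hI := hB (v + Complex.I • w) (p.add_mem hv (p.smul_mem _ hw))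
  simp only [map_add, LinearMap.add_apply, map_smul, LinearMap.smul_apply, map_smulₛₗ, hB v hv,
    hB w hw, Complex.conj_I, smul_eq_mul] at hadd hI
  linear_combination (1 / 2 : ℂ) * hadd + (Complex.I / 2) * hI + (B v w - B w v) / 2 * Complex.I_sq

variable {ι : Type*} [Fintype ι] [DecidableEq ι]

/-- The sesquilinear form `∑ i j, A i j zᵢ w̄ⱼ`, whose diagonal on `ℂ²` is `hermVal A`. -/
noncomputable def hermForm (A : Matrix ι ι ℂ) : (ι → ℂ) →ₗ[ℂ] (ι → ℂ) →ₗ⋆[ℂ] ℂ :=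
  Matrix.toLinearMapₛₗ₂' ℂ (RingHom.id ℂ) (starRingEnd ℂ) A

lemma hermForm_apply (A : Matrix ι ι ℂ) (z w : ι → ℂ) :
    hermForm A z w = ∑ i, ∑ j, A i j * z i * conj (w j) := by
  simp only [hermForm, Matrix.toLinearMapₛₗ₂'_apply, RingHom.id_apply, smul_eq_mul]
  exact Finset.sum_congr rfl fun i _ => Finset.sum_congr rfl fun j _ => by ring

lemma hermForm_self (A : Matrix (Fin 2) (Fin 2) ℂ) (z : Fin 2 → ℂ) :
    hermForm A z z = hermVal A z := hermForm_apply A z z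

@[fun_prop]
lemma continuous_hermForm {α : Type*} [TopologicalSpace α] (A : Matrix ι ι ℂ) {f g : α → ι → ℂ}
    (hf : Continuous f) (hg : Continuous g) : Continuous fun x => hermForm A (f x) (g x) := by
  simp only [hermForm_apply]
  fun_prop

lemma conj_hermForm {A : Matrix ι ι ℂ} (hA : A.IsHermitian) (z w : ι → ℂ) :
    conj (hermForm A z w) = hermForm A w z := by
  simp only [hermForm_apply, map_sum, map_mul, Complex.conj_conj]
  rw [Finset.sum_comm]
  refine Finset.sum_congr rfl fun i _ => Finset.sum_congr rfl fun j _ => ?_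
  rw [show conj (A j i) = A i j from hA.apply i j]
  ring

lemma eq_zero_of_forall_hermForm_eq_zero {A : Matrix ι ι ℂ} (hA : IsUnit A.det) {z : ι → ℂ}
    (hz : ∀ w, hermForm A z w = 0) : z = 0 := by
  refine (Matrix.nondegenerate_of_det_ne_zero hA.ne_zero).eq_zero_of_ortho fun w => ?_
  rw [← hz (star w), hermForm_apply]
  simp [dotProduct, Matrix.mulVec, Finset.mul_sum, mul_left_comm, mul_assoc]

end Sesquilinear

section CurveInHypersurface

/-- The projection `(z, ζ, w) ↦ z`. -/
noncomputable def zPart : (Fin 4 → ℂ) →L[ℂ] (Fin 2 → ℂ) :=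
  ContinuousLinearMap.pi ![ContinuousLinearMap.proj 0, ContinuousLinearMap.proj 1]

lemma zPart_apply (p : Fin 4 → ℂ) : zPart p = ![p 0, p 1] := by
  ext i
  fin_cases i <;> rfl

/-- The inclusion `z ↦ (z, 0, 0)`. -/
noncomputable def zIncl : (Fin 2 → ℂ) →L[ℂ] (Fin 4 → ℂ) :=
  ContinuousLinearMap.pi ![ContinuousLinearMap.proj 0, ContinuousLinearMap.proj 1, 0, 0]

lemma zIncl_apply_two (z : Fin 2 → ℂ) : zIncl z 2 = 0 := rfl

lemma zIncl_apply_three (z : Fin 2 → ℂ) : zIncl z 3 = 0 := rfl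

lemma zPart_zIncl (z : Fin 2 → ℂ) : zPart (zIncl z) = z := by
  ext i
  fin_cases i <;> rfl

lemma zPart_single_two : zPart (Pi.single 2 1) = 0 := by
  ext i
  fin_cases i <;> rfl

/-- The real-linear projection `(z, ζ, w) ↦ (z, ζ, Re w)` to the coordinates over which `hyp` is a
graph. -/
noncomputable def graphCoord : (Fin 4 → ℂ) →L[ℝ] (Fin 2 → ℂ) × ℂ × ℝ :=
  (zPart.restrictScalars ℝ).prod
    ((ContinuousLinearMap.proj 2).prod (Complex.reCLM ∘L ContinuousLinearMap.proj 3))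

lemma graphCoord_apply (p : Fin 4 → ℂ) : graphCoord p = (zPart p, p 2, (p 3).re) := rfl

@[fun_prop]
lemma continuous_quadVal (k l m : ℂ) : Continuous (quadVal k l m) := by
  unfold quadVal
  fun_prop

lemma quadVal_smul (k l m c : ℂ) (z : Fin 2 → ℂ) :
    quadVal k l m (c • z) = c ^ 2 * quadVal k l m z := by
  simp only [quadVal, Pi.smul_apply, smul_eq_mul]
  ring

variable {A : Matrix (Fin 2) (Fin 2) ℂ} {k l m : ℂ} {E : (Fin 2 → ℂ) × ℂ × ℝ → ℝ}

lemma mem_hyp_iff {p : Fin 4 → ℂ} : p ∈ hyp A k l m E ↔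
    (p 3).im = (hermForm A (zPart p) (zPart p)).re + 2 * (quadVal k l m (zPart p) * conj (p 2)).re
      + E (graphCoord p) := by
  rw [hermForm_self, graphCoord_apply, zPart_apply]
  rfl

lemma smul_mem_hyp_iff {t : ℝ} (ht : t ≠ 0) {y : Fin 4 → ℂ} : t • y ∈ hyp A k l m E ↔
    (y 3).im = t * ((hermForm A (zPart y) (zPart y)).re
      + t * (2 * (quadVal k l m (zPart y) * conj (y 2)).re)) + E (graphCoord (t • y)) / t := by
  have hherm : hermForm A (zPart (t • y)) (zPart (t • y))
      = (t ^ 2 : ℝ) * hermForm A (zPart y) (zPart y) := by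
    rw [← Complex.coe_smul, map_smul, map_smulₛₗ, map_smul, LinearMap.smul_apply,
      Complex.conj_ofReal, smul_smul, smul_eq_mul]
    push_cast
    ring
  have hquad : quadVal k l m (zPart (t • y)) * conj ((t • y) 2)
      = (t ^ 3 : ℝ) * (quadVal k l m (zPart y) * conj (y 2)) := by
    rw [← Complex.coe_smul, map_smul, quadVal_smul, Pi.smul_apply, smul_eq_mul, map_mul,
      Complex.conj_ofReal]
    push_cast
    ring
  rw [mem_hyp_iff, hherm, hquad, Complex.re_ofReal_mul, Complex.re_ofReal_mul, Pi.smul_apply,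
    Complex.smul_im, smul_eq_mul]
  field_simp

lemma continuous_re_hermForm_zPart : Continuous fun p : (Fin 4 → ℂ) × (Fin 4 → ℂ) =>
    (hermForm A (zPart p.1) (zPart p.2)).re := by
  fun_prop

lemma continuous_re_quadVal_mul_conj :
    Continuous fun p : Fin 4 → ℂ => 2 * (quadVal k l m (zPart p) * conj (p 2)).re := by
  fun_prop

lemma continuous_im_apply (i : Fin 4) : Continuous fun p : Fin 4 → ℂ => (p i).im := by
  fun_prop

variable {X : ℝ → Fin 4 → ℂ} {a b c : Fin 4 → ℂ}

lemma HasThreeJet.im_first_coeff_of_mem_hyp (hE : wOrder4 E) (hEd : ContDiffAt ℝ 4 E 0)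
    (hX : HasThreeJet X a b c) (hmem : ∀ᶠ t in 𝓝[≠] 0, X t ∈ hyp A k l m E) : (a 3).im = 0 := by
  obtain ⟨y, d, r, hy, -, -, hXy⟩ := hX.exists_iterated_quotients
  have ht : Tendsto (fun t : ℝ => t) (𝓝[≠] 0) (𝓝 0) := tendsto_id.mono_left nhdsWithin_le_nhds
  have hrest : Tendsto (fun t => E (graphCoord (t • y t)) / t) (𝓝[≠] 0) (𝓝 0) := by
    have hcoord : Tendsto (fun t => graphCoord (t • y t)) (𝓝[≠] 0) (𝓝 0) :=
      (graphCoord.continuous.tendsto' 0 0 (map_zero _)).comp (by simpa using ht.smul hy)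
    have hlittle : (fun t => E (graphCoord (t • y t))) =o[𝓝[≠] 0]
        fun t => t • graphCoord (y t) := by
      simpa [Function.comp_def, hE.apply_zero] using
        (hE.hasFDerivAt hEd).isLittleO.comp_tendsto hcoord
    have hbig : (fun t => t • graphCoord (y t)) =O[𝓝[≠] 0] fun t : ℝ => t := by
      simpa using (Asymptotics.isBigO_refl (fun t : ℝ => t) (𝓝[≠] 0)).smul
        (((graphCoord.continuous.tendsto a).comp hy).isBigO_one ℝ)
    exact (hlittle.trans_isBigO hbig).tendsto_div_nhds_zero
  have hlim := (ht.mul (((continuous_re_hermForm_zPart (A := A)).tendsto (a, a)).comp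
    (hy.prodMk_nhds hy) |>.add (ht.mul
      (((continuous_re_quadVal_mul_conj (k := k) (l := l) (m := m)).tendsto a).comp hy)))).add hrest
  rw [zero_mul, zero_add] at hlim
  refine tendsto_nhds_unique (((continuous_im_apply 3).tendsto a).comp hy) (hlim.congr' ?_)
  filter_upwards [hXy, hmem, self_mem_nhdsWithin] with t ⟨htX, _⟩ hmemt ht₀
  exact ((smul_mem_hyp_iff ht₀).mp (htX ▸ hmemt)).symm

lemma smul_mem_hyp_iff_of_eq_smul {t : ℝ} (ht : t ≠ 0) {y : Fin 4 → ℂ} {s : ℂ} (hs : y 3 = t • s) :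
    t • y ∈ hyp A k l m E ↔ s.im = (hermForm A (zPart y) (zPart y)).re
      + t * (2 * (quadVal k l m (zPart y) * conj (y 2)).re
        + E (weightedDilation t (zPart y, y 2, s.re)) / t ^ 3) := by
  have hcoord : graphCoord (t • y) = weightedDilation t (zPart y, y 2, s.re) := by
    rw [map_smul, graphCoord_apply, hs]
    simp [weightedDilation, pow_two, mul_assoc]
  rw [smul_mem_hyp_iff ht, hcoord, hs, Complex.smul_im, smul_eq_mul]
  field_simp
  ring_nf

lemma HasThreeJet.exists_iterated_quotients_of_mem_hyp (hE : wOrder4 E) (hEd : ContDiffAt ℝ 4 E 0)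
    (hX : HasThreeJet X a b c) (hmem : ∀ᶠ t in 𝓝[≠] 0, X t ∈ hyp A k l m E) (ha : a 3 = 0) :
    ∃ (y d r : ℝ → Fin 4 → ℂ) (q : ℝ → ℝ), Tendsto y (𝓝[≠] 0) (𝓝 a) ∧ Tendsto d (𝓝[≠] 0) (𝓝 b) ∧
      Tendsto r (𝓝[≠] 0) (𝓝 c) ∧
      Tendsto q (𝓝[≠] 0) (𝓝 (2 * (quadVal k l m (zPart a) * conj (a 2)).re)) ∧
      ∀ᶠ t in 𝓝[≠] 0, y t = a + t • d t ∧ d t = b + t • r t ∧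
        (d t 3).im = (hermForm A (zPart (y t)) (zPart (y t))).re + t * q t := by
  obtain ⟨y, d, r, hy, hd, hr, hXy⟩ := hX.exists_iterated_quotients
  have hcoord : Tendsto (fun t => (zPart (y t), y t 2, (d t 3).re)) (𝓝[≠] 0)
      (𝓝 (zPart a, a 2, (b 3).re)) :=
    ((zPart.continuous.tendsto a).comp hy).prodMk_nhds ((hy.apply_nhds 2).prodMk_nhds
      ((Complex.continuous_re.tendsto _).comp (hd.apply_nhds 3)))
  refine ⟨y, d, r, fun t => 2 * (quadVal k l m (zPart (y t)) * conj (y t 2)).re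
    + E (weightedDilation t (zPart (y t), y t 2, (d t 3).re)) / t ^ 3, hy, hd, hr, ?_, ?_⟩
  · simpa using ((continuous_re_quadVal_mul_conj.tendsto a).comp hy).add
      (hE.tendsto_comp_weightedDilation_div hEd hcoord)
  · filter_upwards [hXy, hmem, self_mem_nhdsWithin] with t ⟨htX, hty, htd⟩ hmemt ht₀
    exact ⟨hty, htd, (smul_mem_hyp_iff_of_eq_smul ht₀ (by simp [hty, ha])).mp (htX ▸ hmemt)⟩

lemma HasThreeJet.im_second_coeff_of_mem_hyp (hE : wOrder4 E) (hEd : ContDiffAt ℝ 4 E 0)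
    (hX : HasThreeJet X a b c) (hmem : ∀ᶠ t in 𝓝[≠] 0, X t ∈ hyp A k l m E) (ha : a 3 = 0) :
    (b 3).im = (hermForm A (zPart a) (zPart a)).re := by
  obtain ⟨y, d, r, q, hy, hd, -, hq, heq⟩ := hX.exists_iterated_quotients_of_mem_hyp hE hEd hmem ha
  have ht : Tendsto (fun t : ℝ => t) (𝓝[≠] 0) (𝓝 0) := tendsto_id.mono_left nhdsWithin_le_nhds
  have hlim := ((continuous_re_hermForm_zPart (A := A)).tendsto (a, a)).comp
    (hy.prodMk_nhds hy) |>.add (ht.mul hq)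
  rw [zero_mul, add_zero] at hlim
  exact tendsto_nhds_unique (((continuous_im_apply 3).tendsto b).comp hd)
    (hlim.congr' (heq.mono fun t h => h.2.2.symm))

lemma HasThreeJet.im_third_coeff_of_mem_hyp (hE : wOrder4 E) (hEd : ContDiffAt ℝ 4 E 0)
    (hX : HasThreeJet X a b c) (hmem : ∀ᶠ t in 𝓝[≠] 0, X t ∈ hyp A k l m E) (ha : a 3 = 0) :
    (c 3).im = (hermForm A (zPart a) (zPart b)).re + (hermForm A (zPart b) (zPart a)).re
      + 2 * (quadVal k l m (zPart a) * conj (a 2)).re := by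
  have hsecond := hX.im_second_coeff_of_mem_hyp hE hEd hmem ha
  obtain ⟨y, d, r, q, hy, hd, hr, hq, heq⟩ :=
    hX.exists_iterated_quotients_of_mem_hyp hE hEd hmem ha
  have hherm := (continuous_re_hermForm_zPart (A := A)).tendsto
  have hlim := (((hherm (a, b)).comp (tendsto_const_nhds.prodMk_nhds hd)).add
    ((hherm (b, a)).comp (hd.prodMk_nhds hy))).add hq
  refine tendsto_nhds_unique (((continuous_im_apply 3).tendsto c).comp hr) (hlim.congr' ?_)
  filter_upwards [heq, self_mem_nhdsWithin] with t ⟨hty, htd, hdt⟩ (ht₀ : t ≠ 0)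
  have hexpand : hermForm A (zPart (y t)) (zPart (y t)) = hermForm A (zPart a) (zPart a)
      + t * (hermForm A (zPart a) (zPart (d t)) + hermForm A (zPart (d t)) (zPart (y t))) := by
    have hzy : zPart (y t) = zPart a + (t : ℂ) • zPart (d t) := by
      rw [← map_smul, Complex.coe_smul, ← map_add, ← hty]
    nth_rw 1 [hzy]
    rw [map_add, LinearMap.add_apply]
    nth_rw 1 [hzy]
    simp only [map_add, map_smulₛₗ, LinearMap.smul_apply, Complex.conj_ofReal, smul_eq_mul,
      RingHom.id_apply]
    ring
  have hd3 : (d t 3).im = (b 3).im + t * (r t 3).im := by simp [htd]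
  rw [hexpand, hd3, hsecond, Complex.add_re, Complex.re_ofReal_mul, add_assoc, add_right_inj,
    ← mul_add, mul_right_inj' ht₀, Complex.add_re] at hdt
  exact hdt.symm

end CurveInHypersurface

section TestCurve

variable {A : Matrix (Fin 2) (Fin 2) ℂ} {k l m : ℂ} {E : (Fin 2 → ℂ) × ℂ × ℝ → ℝ}

lemma exists_hasThreeJet_mem_hyp (hE : wOrder4 E) (hEd : ContDiffAt ℝ 4 E 0) {v : Fin 4 → ℂ}
    (hv : v 3 = 0) (u : ℝ) : ∃ X : ℝ → Fin 4 → ℂ,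
      HasThreeJet X v ((u + (hermForm A (zPart v) (zPart v)).re * Complex.I : ℂ) • Pi.single 3 1)
        (((2 * (quadVal k l m (zPart v) * conj (v 2)).re : ℝ) * Complex.I : ℂ) • Pi.single 3 1) ∧
      ∀ᶠ t in 𝓝[≠] 0, X t ∈ hyp A k l m E := by
  set N := (hermForm A (zPart v) (zPart v)).re
  set κ := 2 * (quadVal k l m (zPart v) * conj (v 2)).re
  let q : ℝ → ℝ := fun t => κ + E (weightedDilation t (zPart v, v 2, u)) / t ^ 3
  let e : Fin 4 → ℂ := Pi.single 3 1
  have he : zPart e = 0 := by simp [zPart_apply, e]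
  have hq : Tendsto q (𝓝[≠] 0) (𝓝 κ) := by
    simpa using (hE.tendsto_comp_weightedDilation_div hEd
      (tendsto_const_nhds (x := (zPart v, v 2, u)))).const_add κ
  refine ⟨fun t => t • (v + (t • (u + (N + t * q t : ℝ) * Complex.I : ℂ)) • e),
    ⟨fun t => (q t * Complex.I) • e, ?_, .of_forall fun t => ?_⟩, ?_⟩
  · exact (((Complex.continuous_ofReal.tendsto κ).comp hq).mul_const Complex.I).smul_const e
  · ext i
    simp only [Pi.add_apply, Pi.smul_apply, Complex.real_smul, smul_eq_mul, e]
    push_cast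
    ring
  · filter_upwards [self_mem_nhdsWithin] with t ht
    refine (smul_mem_hyp_iff_of_eq_smul ht
      (s := u + (N + t * q t : ℝ) * Complex.I) (by simp [hv, e])).mpr ?_
    have hz (c : ℂ) : zPart (v + c • e) = zPart v := by
      rw [map_add, map_smul, he, smul_zero, add_zero]
    have hζ (c : ℂ) : (v + c • e) 2 = v 2 := by simp [e]
    simp only [hz, hζ, Complex.add_re, Complex.add_im, Complex.ofReal_re, Complex.ofReal_im,
      Complex.re_ofReal_mul, Complex.im_ofReal_mul, Complex.I_re, Complex.I_im, mul_zero, mul_one,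
      add_zero, zero_add, N, q, κ]

end TestCurve

section GermMap

/-- `Φ` is the germ at the origin of a holomorphic map, fixing the origin, from the hypersurface
`hyp A k l m E` to `hyp B k' l' m' E'`, both remainders being of class `C⁴` and of weighted order
`≥ 4`. Holomorphy of `Φ` near the origin is encoded as complex differentiability of class `C⁴`. -/
structure IsHypMap (A : Matrix (Fin 2) (Fin 2) ℂ) (k l m : ℂ) (E : (Fin 2 → ℂ) × ℂ × ℝ → ℝ)
    (B : Matrix (Fin 2) (Fin 2) ℂ) (k' l' m' : ℂ) (E' : (Fin 2 → ℂ) × ℂ × ℝ → ℝ)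
    (Φ : (Fin 4 → ℂ) → Fin 4 → ℂ) : Prop where
  contDiffAt : ContDiffAt ℂ 4 Φ 0
  apply_zero : Φ 0 = 0
  eventually_mem : ∀ᶠ p in 𝓝 0, p ∈ hyp A k l m E → Φ p ∈ hyp B k' l' m' E'
  source_contDiffAt : ContDiffAt ℝ 4 E 0
  source_wOrder4 : wOrder4 E
  target_contDiffAt : ContDiffAt ℝ 4 E' 0
  target_wOrder4 : wOrder4 E'

/-- The block `C = ∂f/∂z(0)` of the derivative of `Φ = (f, g, h)`. -/
noncomputable def zBlock (Φ : (Fin 4 → ℂ) → Fin 4 → ℂ) : (Fin 2 → ℂ) →ₗ[ℂ] (Fin 2 → ℂ) :=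
  (zPart ∘L fderiv ℂ Φ 0 ∘L zIncl).toLinearMap

namespace IsHypMap

variable {A B : Matrix (Fin 2) (Fin 2) ℂ} {k l m k' l' m' : ℂ}
  {E E' : (Fin 2 → ℂ) × ℂ × ℝ → ℝ} {Φ : (Fin 4 → ℂ) → Fin 4 → ℂ} {v w : Fin 4 → ℂ}

local notation "D" => fderiv ℂ Φ 0
local notation "Q" => fderiv ℂ (fderiv ℂ Φ) 0
local notation "e₃" => (Pi.single 3 1 : Fin 4 → ℂ)

lemma of_differentiableOn {U : Set (Fin 4 → ℂ)} (hU : U ∈ 𝓝 0) (hΦ : DifferentiableOn ℂ Φ U)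
    (hΦ₀ : Φ 0 = 0) (hmap : ∀ p ∈ hyp A k l m E ∩ U, Φ p ∈ hyp B k' l' m' E')
    (hE : ContDiffAt ℝ 4 E 0) (hE₄ : wOrder4 E) (hE' : ContDiffAt ℝ 4 E' 0) (hE'₄ : wOrder4 E') :
    IsHypMap A k l m E B k' l' m' E' Φ where
  contDiffAt := contDiffAt_of_differentiableOn_complex hU hΦ 4
  apply_zero := hΦ₀
  eventually_mem := by filter_upwards [hU] with p hpU hp using hmap p ⟨hp, hpU⟩
  source_contDiffAt := hE
  source_wOrder4 := hE₄
  target_contDiffAt := hE'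
  target_wOrder4 := hE'₄

lemma exists_hasThreeJet_comp (hΦ : IsHypMap A k l m E B k' l' m' E' Φ) (hv : v 3 = 0) (u : ℝ) :
    ∃ Y : ℝ → Fin 4 → ℂ, (∀ᶠ t in 𝓝[≠] 0, Y t ∈ hyp B k' l' m' E') ∧ HasThreeJet Y (D v)
      ((u + (hermForm A (zPart v) (zPart v)).re * Complex.I : ℂ) • D e₃ + (2⁻¹ : ℝ) • Q v v)
      (((2 * (quadVal k l m (zPart v) * conj (v 2)).re : ℝ) * Complex.I : ℂ) • D e₃
        + (u + (hermForm A (zPart v) (zPart v)).re * Complex.I : ℂ) • Q v e₃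
        + (6⁻¹ : ℝ) • iteratedFDeriv ℂ 3 Φ 0 fun _ => v) := by
  obtain ⟨X, hX, hmem⟩ := exists_hasThreeJet_mem_hyp (k := k) (l := l) (m := m)
    hΦ.source_wOrder4 hΦ.source_contDiffAt hv u
  refine ⟨Φ ∘ X, ?_, ?_⟩
  · filter_upwards [hX.tendsto.eventually hΦ.eventually_mem, hmem] with t hΦt ht using hΦt ht
  · simpa only [map_smul] using hX.comp_holomorphic hΦ.contDiffAt hΦ.apply_zero

lemma fderiv_apply_three (hΦ : IsHypMap A k l m E B k' l' m' E' Φ) (hv : v 3 = 0) : D v 3 = 0 := by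
  have him : ∀ w : Fin 4 → ℂ, w 3 = 0 → (D w 3).im = 0 := fun w hw => by
    obtain ⟨Y, hmem, hY⟩ := hΦ.exists_hasThreeJet_comp hw 0
    exact hY.im_first_coeff_of_mem_hyp hΦ.target_wOrder4 hΦ.target_contDiffAt hmem
  have hI := him (Complex.I • v) (by simp [hv])
  rw [map_smul, Pi.smul_apply, smul_eq_mul, Complex.I_mul_im] at hI
  exact Complex.ext hI (him v hv)

lemma im_second_order (hΦ : IsHypMap A k l m E B k' l' m' E' Φ) (hv : v 3 = 0) (u : ℝ) :
    ((u + (hermForm A (zPart v) (zPart v)).re * Complex.I) * D e₃ 3 + 2⁻¹ * Q v v 3).im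
      = (hermForm B (zPart (D v)) (zPart (D v))).re := by
  obtain ⟨Y, hmem, hY⟩ := hΦ.exists_hasThreeJet_comp hv u
  rw [← hY.im_second_coeff_of_mem_hyp hΦ.target_wOrder4 hΦ.target_contDiffAt hmem
    (hΦ.fderiv_apply_three hv)]
  simp

lemma im_fderiv_single_three (hΦ : IsHypMap A k l m E B k' l' m' E' Φ) : (D e₃ 3).im = 0 := by
  simpa using hΦ.im_second_order (v := 0) rfl 1

lemma snd_fderiv_apply_three (hΦ : IsHypMap A k l m E B k' l' m' E' Φ) (hv : v 3 = 0)
    (hw : w 3 = 0) : Q v w 3 = 0 := by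
  have him : ∀ x : Fin 4 → ℂ, x 3 = 0 → (Q x x 3).im = 0 := fun x hx => by
    have h₁ := hΦ.im_second_order hx 0
    have hI := hΦ.im_second_order (v := Complex.I • x) (by simp [hx]) 0
    have hII (c : ℂ) : -Complex.I * (Complex.I * c) = c := by
      rw [neg_mul, ← mul_assoc, Complex.I_mul_I, neg_one_mul, neg_neg]
    have hII' (c : ℂ) : Complex.I * (Complex.I * c) = -c := by
      rw [← mul_assoc, Complex.I_mul_I, neg_one_mul]
    simp only [map_smul, map_smulₛₗ, LinearMap.smul_apply, smul_apply, Pi.smul_apply, smul_eq_mul,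
      Complex.conj_I, hII, hII', ← h₁] at hI
    simpa [self_eq_neg, neg_eq_iff_add_eq_zero] using hI
  have hdiag : ∀ x : Fin 4 → ℂ, x 3 = 0 → Q x x 3 = 0 := fun x hx => by
    have h := him ((1 + Complex.I) • x) (by simp [hx])
    simp only [map_smul, smul_apply, Pi.smul_apply, smul_eq_mul, ← mul_assoc] at h
    refine Complex.ext ?_ (him x hx)
    have hsq : (1 + Complex.I) * (1 + Complex.I) = (2 : ℝ) * Complex.I := by
      push_cast
      linear_combination Complex.I_mul_I
    rw [hsq, mul_assoc, Complex.im_ofReal_mul, Complex.I_mul_im] at h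
    simpa using h
  have hsymm : Q w v = Q v w :=
    hΦ.contDiffAt.isSymmSndFDerivAt (by norm_num [minSmoothness_of_isRCLikeNormedField]) w v
  have hadd := hdiag (v + w) (by simp [hv, hw])
  simp only [map_add, add_apply, Pi.add_apply, hsymm, hdiag v hv, hdiag w hw] at hadd
  linear_combination hadd / 2

lemma hermForm_fderiv (hΦ : IsHypMap A k l m E B k' l' m' E' Φ) (hA : A.IsHermitian)
    (hB : B.IsHermitian) (hv : v 3 = 0) (hw : w 3 = 0) :
    hermForm B (zPart (D v)) (zPart (D w)) = D e₃ 3 * hermForm A (zPart v) (zPart w) := by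
  let S : (Fin 4 → ℂ) →ₗ[ℂ] (Fin 4 → ℂ) →ₗ⋆[ℂ] ℂ :=
    ((hermForm B).comp (zPart ∘L D).toLinearMap).compl₂ (zPart ∘L D).toLinearMap
      - D e₃ 3 • ((hermForm A).comp zPart.toLinearMap).compl₂ zPart.toLinearMap
  refine sub_eq_zero.mp (sesquilinear_eq_zero_of_forall_diag_eq_zero (B := S)
    (p := LinearMap.ker (LinearMap.proj 3)) (fun x hx => sub_eq_zero.mpr ?_) hv hw)
  have hreal {C : Matrix (Fin 2) (Fin 2) ℂ} (hC : C.IsHermitian) (z : Fin 2 → ℂ) :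
      ((hermForm C z z).re : ℂ) = hermForm C z z :=
    Complex.conj_eq_iff_re.mp (conj_hermForm hC z z)
  have hρ : ((D e₃ 3).re : ℂ) = D e₃ 3 :=
    Complex.conj_eq_iff_re.mp (Complex.conj_eq_iff_im.mpr hΦ.im_fderiv_single_three)
  have hdiag : (hermForm A (zPart x) (zPart x)).re * (D e₃ 3).re
      = (hermForm B (zPart (D x)) (zPart (D x))).re := by
    simpa [hΦ.snd_fderiv_apply_three hx hx] using hΦ.im_second_order hx 0
  change hermForm B (zPart (D x)) (zPart (D x)) = D e₃ 3 * hermForm A (zPart x) (zPart x)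
  rw [← hreal hB, ← hdiag, Complex.ofReal_mul, hreal hA, hρ, mul_comm]

lemma im_third_order (hΦ : IsHypMap A k l m E B k' l' m' E' Φ) (hB : B.IsHermitian)
    (hv : v 3 = 0) :
    2 * (D e₃ 3).re * (quadVal k l m (zPart v) * conj (v 2)).re
        + (hermForm A (zPart v) (zPart v)).re * (Q v e₃ 3).re
        + (iteratedFDeriv ℂ 3 Φ 0 (fun _ => v) 3).im / 6
      = 2 * (hermForm A (zPart v) (zPart v)).re * (hermForm B (zPart (D v)) (zPart (D e₃))).im
        + (hermForm B (zPart (D v)) (zPart (Q v v))).re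
        + 2 * (quadVal k' l' m' (zPart (D v)) * conj (D v 2)).re := by
  obtain ⟨Y, hmem, hY⟩ := hΦ.exists_hasThreeJet_comp hv 0
  have h := hY.im_third_coeff_of_mem_hyp hΦ.target_wOrder4 hΦ.target_contDiffAt hmem
    (hΦ.fderiv_apply_three hv)
  have hswap (x y : Fin 2 → ℂ) : (hermForm B x y).re = (hermForm B y x).re := by
    rw [← conj_hermForm hB y x, Complex.conj_re]
  have hhalf : zPart ((2⁻¹ : ℝ) • Q v v) = (2⁻¹ : ℝ) • zPart (Q v v) :=
    map_smul (zPart.restrictScalars ℝ) _ _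
  have hhalf' (x y : Fin 2 → ℂ) : hermForm B x ((2⁻¹ : ℝ) • y) = (2⁻¹ : ℝ) * hermForm B x y := by
    rw [← Complex.coe_smul, map_smulₛₗ, Complex.conj_ofReal, smul_eq_mul]
  rw [hswap _ (zPart (D v)), map_add, hhalf, map_add, hhalf'] at h
  simp only [Complex.mul_re, Complex.conj_re, Complex.conj_im, Complex.ofReal_mul,
    Complex.ofReal_ofNat, Complex.ofReal_zero, Complex.zero_re, Complex.zero_im, Pi.add_apply,
    Pi.smul_apply, smul_eq_mul, Complex.real_smul, Complex.ofReal_inv, Complex.add_im,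
    Complex.mul_im, Complex.re_ofNat, Complex.add_re, Complex.ofReal_re, Complex.ofReal_im,
    Complex.im_ofNat, Complex.I_re, Complex.I_im, Complex.inv_re, Complex.normSq_ofNat,
    Complex.inv_im, map_smul, map_smulₛₗ, map_mul, map_add, map_zero, Complex.conj_ofReal,
    Complex.conj_I, Complex.neg_re, Complex.neg_im] at h ⊢
  linear_combination h

local notation "e₂" => (Pi.single 2 1 : Fin 4 → ℂ)

lemma fderiv_single_three_ne_zero (hΦ : IsHypMap A k l m E B k' l' m' E' Φ)
    (hD : Function.Surjective D) : D e₃ 3 ≠ 0 := by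
  intro hρ
  obtain ⟨v, hv⟩ := hD e₃
  have htangent : D (v - v 3 • e₃) 3 = 0 := hΦ.fderiv_apply_three (by simp)
  rw [map_sub, map_smul, Pi.sub_apply, Pi.smul_apply, hρ, smul_zero, sub_zero, hv] at htangent
  exact one_ne_zero ((Pi.single_eq_same _ _).symm.trans htangent)

lemma hermForm_zBlock (hΦ : IsHypMap A k l m E B k' l' m' E' Φ) (hA : A.IsHermitian)
    (hB : B.IsHermitian) (z w : Fin 2 → ℂ) :
    hermForm B (zBlock Φ z) (zBlock Φ w) = D e₃ 3 * hermForm A z w := by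
  refine (hΦ.hermForm_fderiv hA hB (zIncl_apply_three z) (zIncl_apply_three w)).trans ?_
  rw [zPart_zIncl, zPart_zIncl]

lemma zBlock_injective (hΦ : IsHypMap A k l m E B k' l' m' E' Φ) (hA : A.IsHermitian)
    (hB : B.IsHermitian) (hdet : IsUnit A.det) (hD : Function.Surjective D) :
    Function.Injective (zBlock Φ) := by
  refine (injective_iff_map_eq_zero _).mpr fun z hz => ?_
  refine eq_zero_of_forall_hermForm_eq_zero hdet fun w => ?_
  have h := hΦ.hermForm_zBlock hA hB z w
  rw [hz, map_zero, LinearMap.zero_apply] at h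
  exact (mul_eq_zero.mp h.symm).resolve_left (hΦ.fderiv_single_three_ne_zero hD)

lemma zPart_fderiv_single_two (hΦ : IsHypMap A k l m E B k' l' m' E' Φ) (hA : A.IsHermitian)
    (hB : B.IsHermitian) (hdet : IsUnit A.det) (hD : Function.Surjective D) :
    zPart (D e₂) = 0 := by
  obtain ⟨z, hz⟩ := LinearMap.surjective_of_injective (hΦ.zBlock_injective hA hB hdet hD)
    (zPart (D e₂))
  have hz₀ : z = 0 := eq_zero_of_forall_hermForm_eq_zero hdet fun w => by
    have hzero : hermForm B (zPart (D e₂)) (zBlock Φ w) = 0 := by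
      refine (hΦ.hermForm_fderiv hA hB (by simp) (zIncl_apply_three w)).trans ?_
      rw [zPart_single_two, map_zero, LinearMap.zero_apply, mul_zero]
    rw [← hz, hΦ.hermForm_zBlock hA hB] at hzero
    exact (mul_eq_zero.mp hzero).resolve_left (hΦ.fderiv_single_three_ne_zero hD)
  rw [← hz, hz₀, map_zero]

lemma fderiv_single_two_two_ne_zero (hΦ : IsHypMap A k l m E B k' l' m' E' Φ)
    (hD : Function.Injective D) (hζ : zPart (D e₂) = 0) : D e₂ 2 ≠ 0 := by
  intro hβ
  have hzero : D e₂ = 0 := by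
    rw [zPart_apply] at hζ
    ext i
    fin_cases i
    exacts [congrFun hζ 0, congrFun hζ 1, hβ, hΦ.fderiv_apply_three (by simp)]
  exact Pi.single_ne_zero_iff.mpr one_ne_zero (hD (hzero.trans (map_zero D).symm))

-- Taking the part odd in `s` of `im_third_order` at `c z + s e₂` removes the terms pure in `z`.
lemma im_third_order_odd (hΦ : IsHypMap A k l m E B k' l' m' E' Φ) (hB : B.IsHermitian)
    (hζ : zPart (D e₂) = 0) (z : Fin 2 → ℂ) (c s : ℂ) :
    4 * (D e₃ 3).re * (c ^ 2 * conj s * quadVal k l m z).re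
        + 2 * Complex.normSq c * (hermForm A z z).re * (s * Q e₂ e₃ 3).re
        + (iteratedFDeriv ℂ 3 Φ 0 (fun _ => c • zIncl z + s • e₂) 3
          - iteratedFDeriv ℂ 3 Φ 0 (fun _ => c • zIncl z - s • e₂) 3).im / 6
      = 4 * Complex.normSq c * (conj s * hermForm B (zBlock Φ z) (zPart (Q (zIncl z) e₂))).re
        + 4 * (c ^ 2 * conj s * (conj (D e₂ 2) * quadVal k' l' m' (zBlock Φ z))).re := by
  have hzBlock : zPart (D (zIncl z)) = zBlock Φ z := rfl
  have hsymm : Q e₂ (zIncl z) = Q (zIncl z) e₂ :=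
    hΦ.contDiffAt.isSymmSndFDerivAt (by norm_num [minSmoothness_of_isRCLikeNormedField]) _ _
  have hv (s : ℂ) : (c • zIncl z + s • e₂) 2 = s := by simp [zIncl_apply_two]
  have hpos := hΦ.im_third_order hB (v := c • zIncl z + s • e₂) (by simp [zIncl_apply_three])
  have hneg := hΦ.im_third_order hB (v := c • zIncl z + -s • e₂) (by simp [zIncl_apply_three])
  rw [sub_eq_add_neg (c • zIncl z), ← neg_smul]
  simp only [hv, hsymm, hζ, hzBlock, zPart_zIncl, zPart_single_two, smul_zero, add_zero, map_add,
    map_smul, map_smulₛₗ, add_apply, smul_apply, LinearMap.smul_apply, Pi.add_apply, Pi.smul_apply,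
    smul_eq_mul, quadVal_smul, map_mul] at hpos hneg
  simp only [pow_two, Complex.add_re, Complex.mul_re, Complex.mul_im, Complex.add_im,
    Complex.neg_re, Complex.neg_im, Complex.conj_re, Complex.conj_im, Complex.sub_im,
    Complex.normSq_apply] at hpos hneg ⊢
  linear_combination hpos - hneg

-- `c² c̄` and `c³` behave differently under rotation of `c`, so four values of `c` separate them.
lemma eq_zero_of_forall_re_sq_mul_conj_add_im_cube {a b : ℂ}
    (h : ∀ c : ℂ, (c ^ 2 * conj c * a).re + (c ^ 3 * b).im = 0) : a = 0 := by
  have h₁ := h 1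
  have hI := h Complex.I
  have hp := h (1 + Complex.I)
  have hm := h (1 - Complex.I)
  simp only [pow_succ, pow_zero, Complex.mul_re, Complex.mul_im, map_one, map_add, map_sub,
    Complex.conj_I, Complex.add_re, Complex.add_im, Complex.sub_re, Complex.sub_im, Complex.neg_re,
    Complex.neg_im, Complex.one_re, Complex.one_im, Complex.I_re, Complex.I_im] at h₁ hI hp hm
  exact Complex.ext (by rw [Complex.zero_re]; linarith) (by rw [Complex.zero_im]; linarith)

lemma quadVal_zBlock (hΦ : IsHypMap A k l m E B k' l' m' E' Φ) (hB : B.IsHermitian)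
    (hζ : zPart (D e₂) = 0) (z : Fin 2 → ℂ) :
    conj (D e₂ 2) * quadVal k' l' m' (zBlock Φ z) = D e₃ 3 * quadVal k l m z := by
  let P : (Fin 4 → ℂ) → ℂ := fun v => iteratedFDeriv ℂ 3 Φ 0 (fun _ => v) 3
  have hP (c : ℂ) (v : Fin 4 → ℂ) : P (c • v) = c ^ 3 * P v := by
    simp only [P, ContinuousMultilinearMap.map_smul_univ _ (fun _ => c) (fun _ => v),
      Finset.prod_const, Finset.card_univ, Fintype.card_fin, Pi.smul_apply, smul_eq_mul]
  let x := zIncl z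
  refine (sub_eq_zero.mp (eq_zero_of_forall_re_sq_mul_conj_add_im_cube
    (b := (P (x + e₂) - P (x - e₂) - (P (Complex.I • x + e₂) - P (Complex.I • x - e₂))) / 48)
    fun c => ?_)).symm
  have hρ : D e₃ 3 = (D e₃ 3).re :=
    (Complex.conj_eq_iff_re.mp (Complex.conj_eq_iff_im.mpr hΦ.im_fderiv_single_three)).symm
  have h₁ := hΦ.im_third_order_odd hB hζ z c c
  have hI := hΦ.im_third_order_odd hB hζ z (c * Complex.I) c
  have hI₂ (a : ℂ) : (c * Complex.I) ^ 2 * conj c * a = -(c ^ 2 * conj c * a) := by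
    linear_combination c ^ 2 * conj c * a * Complex.I_sq
  simp only [mul_smul, ← smul_add, ← smul_sub] at h₁ hI
  change _ + _ + (P _ - P _).im / 6 = _ at h₁ hI
  simp only [hP, hI₂, Complex.normSq_mul, Complex.normSq_I, mul_one, Complex.neg_re] at h₁ hI
  have hIm : (c ^ 3 * ((P (x + e₂) - P (x - e₂)
      - (P (Complex.I • x + e₂) - P (Complex.I • x - e₂))) / 48)).im
      = ((c ^ 3 * P (x + e₂) - c ^ 3 * P (x - e₂)).im
        - (c ^ 3 * P (Complex.I • x + e₂) - c ^ 3 * P (Complex.I • x - e₂)).im) / 48 := by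
    rw [← Complex.sub_im, ← Complex.div_ofNat_im]
    ring_nf
  rw [hIm, hρ, mul_sub, mul_left_comm, Complex.sub_re, Complex.re_ofReal_mul]
  linear_combination (h₁ - hI) / 8

lemma isUnit_det_toMatrix'_zBlock (hΦ : IsHypMap A k l m E B k' l' m' E' Φ) (hA : A.IsHermitian)
    (hB : B.IsHermitian) (hdet : IsUnit A.det) (hD : Function.Surjective D) :
    IsUnit (LinearMap.toMatrix' (zBlock Φ)).det := by
  refine (Matrix.isUnit_iff_isUnit_det _).mp (Matrix.mulVec_injective_iff_isUnit.mp ?_)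
  simpa only [Function.Injective, LinearMap.toMatrix'_mulVec] using
    hΦ.zBlock_injective hA hB hdet hD

end IsHypMap

end GermMap

section PartialDerivatives

variable {Φ : (Fin 4 → ℂ) → Fin 4 → ℂ} {p : Fin 4 → ℂ}

lemma zIncl_single (j : Fin 2) : zIncl (Pi.single j 1) = Pi.single (Fin.castAdd 2 j) 1 := by
  ext i
  fin_cases i <;> fin_cases j <;> rfl

lemma pd_apply (hΦ : DifferentiableAt ℂ Φ p) (i j : Fin 4) :
    pd j (fun q => Φ q i) p = fderiv ℂ Φ p (Pi.single j 1) i := by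
  rw [pd, fderiv_apply hΦ i]
  rfl

lemma pd_pd_apply (hΦ : ContDiffAt ℂ 2 Φ p) (i j a : Fin 4) :
    pd i (pd j fun q => Φ q a) p
      = fderiv ℂ (fderiv ℂ Φ) p (Pi.single i 1) (Pi.single j 1) a := by
  have hpd : (pd j fun q => Φ q a) =ᶠ[𝓝 p] fun q => fderiv ℂ Φ q (Pi.single j 1) a := by
    filter_upwards [hΦ.eventually (by simp)] with q hq
    exact pd_apply (hq.differentiableAt (by norm_num)) a j
  have hderiv : HasFDerivAt (fderiv ℂ Φ) (fderiv ℂ (fderiv ℂ Φ) p) p :=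
    ((hΦ.fderiv_right (m := 1) (by norm_num)).differentiableAt one_ne_zero).hasFDerivAt
  rw [pd, hpd.fderiv_eq,
    (hasFDerivAt_pi'.mp (hderiv.clm_apply (hasFDerivAt_const (Pi.single j 1) p)) a).fderiv]
  simp

lemma bijective_fderiv_of_isUnit_det (hΦ : DifferentiableAt ℂ Φ p)
    (hdet : IsUnit (Matrix.of fun i j => pd j (fun q => Φ q i) p).det) :
    Function.Bijective (fderiv ℂ Φ p) := by
  have hjac : (Matrix.of fun i j => pd j (fun q => Φ q i) p).mulVec = fderiv ℂ Φ p := by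
    have hmat : (Matrix.of fun i j => pd j (fun q => Φ q i) p)
        = LinearMap.toMatrix' (fderiv ℂ Φ p : (Fin 4 → ℂ) →ₗ[ℂ] Fin 4 → ℂ) := by
      ext i j
      rw [LinearMap.toMatrix'_apply, Matrix.of_apply, pd_apply hΦ]
      rfl
    ext v : 1
    rw [hmat, LinearMap.toMatrix'_mulVec]
    rfl
  rw [← hjac]
  have hunit := (Matrix.isUnit_iff_isUnit_det _).mpr hdet
  exact ⟨Matrix.mulVec_injective_iff_isUnit.mpr hunit,
    Matrix.mulVec_surjective_iff_isUnit.mpr hunit⟩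

lemma zBlock_single (Φ : (Fin 4 → ℂ) → Fin 4 → ℂ) (j : Fin 2) :
    zBlock Φ (Pi.single j 1) = zPart (fderiv ℂ Φ 0 (Pi.single (Fin.castAdd 2 j) 1)) := by
  rw [← zIncl_single]
  rfl

lemma toMatrix'_zBlock (hΦ : DifferentiableAt ℂ Φ 0) :
    LinearMap.toMatrix' (zBlock Φ)
      = !![pd 0 (fun p => Φ p 0) 0, pd 1 (fun p => Φ p 0) 0;
          pd 0 (fun p => Φ p 1) 0, pd 1 (fun p => Φ p 1) 0] := by
  simp only [pd_apply hΦ]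
  ext i j
  rw [LinearMap.toMatrix'_apply, zBlock_single]
  fin_cases i <;> fin_cases j <;> rfl

end PartialDerivatives

theorem stmt_3_general (A B : Matrix (Fin 2) (Fin 2) ℂ) (hA : A.IsHermitian)
    (hB : B.IsHermitian) (hnd : IsUnit A.det) (kK lK mK kT lT mT : ℂ)
    (E Et : (Fin 2 → ℂ) × ℂ × ℝ → ℝ) (hE : ContDiffAt ℝ 4 E 0) (hEt : ContDiffAt ℝ 4 Et 0)
    (hE4 : wOrder4 E) (hEt4 : wOrder4 Et)
    (f1 f2 g h : (Fin 4 → ℂ) → ℂ) (U : Set (Fin 4 → ℂ)) (hU : U ∈ 𝓝 (0 : Fin 4 → ℂ))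
    (hf1 : DifferentiableOn ℂ f1 U) (hf2 : DifferentiableOn ℂ f2 U)
    (hg : DifferentiableOn ℂ g U) (hh : DifferentiableOn ℂ h U)
    (h0 : f1 0 = 0 ∧ f2 0 = 0 ∧ g 0 = 0 ∧ h 0 = 0)
    (hjac : IsUnit (Matrix.det (Matrix.of fun i j : Fin 4 => pd j (![f1, f2, g, h] i) 0)))
    (hmap : ∀ p ∈ hyp A kK lK mK E ∩ U, ![f1 p, f2 p, g p, h p] ∈ hyp B kT lT mT Et) :
    pd 2 f1 0 = 0 ∧ pd 2 f2 0 = 0 ∧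
    pd 0 h 0 = 0 ∧ pd 1 h 0 = 0 ∧ pd 2 h 0 = 0 ∧
    (∀ i j : Fin 4, i ≠ 3 → j ≠ 3 → pd i (pd j h) 0 = 0) ∧
    (pd 3 h 0).im = 0 ∧ pd 3 h 0 ≠ 0 ∧
    IsUnit (Matrix.det !![pd 0 f1 0, pd 1 f1 0; pd 0 f2 0, pd 1 f2 0]) ∧
    pd 2 g 0 ≠ 0 ∧
    (∀ z : Fin 2 → ℂ,
      hermVal B ((!![pd 0 f1 0, pd 1 f1 0; pd 0 f2 0, pd 1 f2 0]).mulVec z)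
          = pd 3 h 0 * hermVal A z ∧
      quadVal kT lT mT ((!![pd 0 f1 0, pd 1 f1 0; pd 0 f2 0, pd 1 f2 0]).mulVec z)
          = (pd 3 h 0 / conj (pd 2 g 0)) * quadVal kK lK mK z) := by
  let Φ : (Fin 4 → ℂ) → Fin 4 → ℂ := fun p i => ![f1, f2, g, h] i p
  have hd : DifferentiableOn ℂ Φ U := differentiableOn_pi.mpr fun i => by fin_cases i <;> assumption
  have hΦ₀ : Φ 0 = 0 := by ext i; fin_cases i; exacts [h0.1, h0.2.1, h0.2.2.1, h0.2.2.2]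
  have hvec (p) : ![f1 p, f2 p, g p, h p] = Φ p := by ext i; fin_cases i <;> rfl
  have hΦ : IsHypMap A kK lK mK E B kT lT mT Et Φ :=
    .of_differentiableOn hU hd hΦ₀ (fun p hp => hvec p ▸ hmap p hp) hE hE4 hEt hEt4
  have hpd (i j : Fin 4) : pd j (![f1, f2, g, h] i) 0 = fderiv ℂ Φ 0 (Pi.single j 1) i :=
    pd_apply (hd.differentiableAt hU) i j
  obtain ⟨hinj, hsurj⟩ := bijective_fderiv_of_isUnit_det (hd.differentiableAt hU) hjac
  have hζ := hΦ.zPart_fderiv_single_two hA hB hnd hsurj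
  have hβ : pd 2 g 0 ≠ 0 := hpd 2 2 ▸ hΦ.fderiv_single_two_two_ne_zero hinj hζ
  have hC : !![pd 0 f1 0, pd 1 f1 0; pd 0 f2 0, pd 1 f2 0] = LinearMap.toMatrix' (zBlock Φ) :=
    (toMatrix'_zBlock (hd.differentiableAt hU)).symm
  simp only [hC, LinearMap.toMatrix'_mulVec, ← hermForm_self, hΦ.hermForm_zBlock hA hB]
  refine ⟨(hpd 0 2).trans (congrFun hζ 0), (hpd 1 2).trans (congrFun hζ 1),
    (hpd 3 0).trans (hΦ.fderiv_apply_three (by simp)),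
    (hpd 3 1).trans (hΦ.fderiv_apply_three (by simp)),
    (hpd 3 2).trans (hΦ.fderiv_apply_three (by simp)),
    fun i j hi hj => (pd_pd_apply (hΦ.contDiffAt.of_le (by norm_num)) i j 3).trans
      (hΦ.snd_fderiv_apply_three (by simp [hi.symm]) (by simp [hj.symm])),
    (congrArg Complex.im (hpd 3 3)).trans hΦ.im_fderiv_single_three,
    hpd 3 3 ▸ hΦ.fderiv_single_three_ne_zero hsurj,
    hΦ.isUnit_det_toMatrix'_zBlock hA hB hnd hsurj, hβ,
    fun z => ⟨congrArg (· * _) (hpd 3 3).symm, ?_⟩⟩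
  rw [div_mul_eq_mul_div, eq_div_iff ((map_ne_zero _).mpr hβ), mul_comm]
  have := hΦ.quadVal_zBlock hB hζ z
  rwa [← hpd, ← hpd] at this

/-- Normalization of the weight-≤3 jet of a local biholomorphism between two
hypersurfaces `Im w = ⟨z,z̄⟩ + 2Re(K(z,z) ζ̄) + O(4)` fixing the origin. -/
theorem stmt_3 (A : Matrix (Fin 2) (Fin 2) ℂ) (hherm : A.conjTranspose = A)
    (hnd : IsUnit A.det) (kK lK mK kT lT mT : ℂ)
    (E Et : (Fin 2 → ℂ) × ℂ × ℝ → ℝ)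
    (hE : AnalyticAt ℝ E 0) (hEt : AnalyticAt ℝ Et 0)
    (hE4 : wOrder4 E) (hEt4 : wOrder4 Et)
    (f1 f2 g h : (Fin 4 → ℂ) → ℂ) (U : Set (Fin 4 → ℂ)) (hU : U ∈ 𝓝 (0 : Fin 4 → ℂ))
    (hf1 : DifferentiableOn ℂ f1 U) (hf2 : DifferentiableOn ℂ f2 U)
    (hg : DifferentiableOn ℂ g U) (hh : DifferentiableOn ℂ h U)
    (h0 : f1 0 = 0 ∧ f2 0 = 0 ∧ g 0 = 0 ∧ h 0 = 0)
    (hjac : IsUnit (Matrix.det (Matrix.of fun i j : Fin 4 => pd j (![f1, f2, g, h] i) 0)))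
    (hmap : ∀ p ∈ hyp A kK lK mK E ∩ U, ![f1 p, f2 p, g p, h p] ∈ hyp A kT lT mT Et) :
    -- ∂f/∂ζ(0) = 0
    pd 2 f1 0 = 0 ∧ pd 2 f2 0 = 0 ∧
    -- first partials of h in z₁, z₂, ζ vanish at 0
    pd 0 h 0 = 0 ∧ pd 1 h 0 = 0 ∧ pd 2 h 0 = 0 ∧
    -- second partials of h in (z₁, z₂, ζ) vanish at 0
    (∀ i j : Fin 4, i ≠ 3 → j ≠ 3 → pd i (pd j h) 0 = 0) ∧
    -- ρ = ∂h/∂w(0) is a nonzero real number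
    (pd 3 h 0).im = 0 ∧ pd 3 h 0 ≠ 0 ∧
    -- C = ∂f/∂z(0) is invertible
    IsUnit (Matrix.det !![pd 0 f1 0, pd 1 f1 0; pd 0 f2 0, pd 1 f2 0]) ∧
    -- β = ∂g/∂ζ(0) ≠ 0
    pd 2 g 0 ≠ 0 ∧
    -- transformation rules for the forms
    (∀ z : Fin 2 → ℂ,
      hermVal A ((!![pd 0 f1 0, pd 1 f1 0; pd 0 f2 0, pd 1 f2 0]).mulVec z)
          = pd 3 h 0 * hermVal A z ∧
      quadVal kT lT mT ((!![pd 0 f1 0, pd 1 f1 0; pd 0 f2 0, pd 1 f2 0]).mulVec z)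
          = (pd 3 h 0 / conj (pd 2 g 0)) * quadVal kK lK mK z) :=
  stmt_3_general A A hherm hherm hnd kK lK mK kT lT mT E Et hE.contDiffAt hEt.contDiffAt hE4 hEt4
    f1 f2 g h U hU hf1 hf2 hg hh h0 hjac hmap
end

section
/- For all parameters d, κ, l, n ∈ ℝ and a, b, c, m, M, N ∈ ℂ, the polynomial 4-tuple (f, g, h, e) given by f(z₁,z₂,ζ,w) = a − 2·conj(c)·z₂ + i·κ·ζ + M·z₁ + m·ζ² + 2i·conj(N)·z₁·ζ + N·w, g = b + (2M − 3l)·z₂ − conj(m)·ζ + 2i·conj(N)·z₂·ζ − i·N·z₁ + i·n·ζ², h = c + (3l − conj(M))·ζ + i·conj(N)·ζ², e = d + 2i·conj(a)·ζ + 2i·conj(c)·z₁ + 2i·conj(b)·ζ² + 3l·w + 2i·conj(N)·ζ·w, is tangent to Q on all of ℂ⁴; that is, for every (z₁, z₂, ζ, w) ∈ Q one has Im(e) = 2Re( f·conj(ζ) + g·conj(ζ)² + h·(conj(z₁) + 2·conj(z₂)·ζ) ), where f, g, h, e are evaluated at (z₁, z₂, ζ, w). -/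
open Complex ComplexConjugate

/-!
At a fixed point of `Q`, tangency is an `ℝ`-linear condition on the vector `(f, g, h, e)`, so it
can be checked on generators. These come from symmetries of the hypersurfaces
`Im w = 2 Re ∑ⱼ zⱼ ζ̄ʲ`, of which `Q` is the case `j = 1, 2`: translations (`d`, `a`, `b`, `c`),
shears mixing the `zⱼ` (`κ`, `n`, `m`), weighted dilations (`l`, `M`), and quadratic
fields, completed by linear terms (`N`). Only the last two families use the equation of the
hypersurface.
-/

theorem im_two_I_mul (u : ℂ) : (2 * I * u).im = 2 * u.re := by
  simp

theorem re_two_I_mul_sub_conj_mul_add {p w : ℂ} (hw : w.im = 2 * p.re) (α : ℂ) :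
    (2 * I * (α - conj α) * p + conj α * w).re = (α * w).re := by
  simp only [sub_conj, add_re, mul_re, mul_im, conj_re, conj_im, ofReal_re, ofReal_im, I_re, I_im,
    re_ofNat, im_ofNat, hw]
  ring

section ModelHypersurface

variable {n : ℕ}

/-- The function `z ↦ ∑ⱼ zⱼ ζ̄ʲ`, twice whose real part is `Im w` on the model hypersurface.
The index `j : Fin n` carries the exponent `j + 1`. -/
noncomputable def modelPotential (ζ : ℂ) : (Fin n → ℂ) →ₗ[ℂ] ℂ :=
  Fintype.linearCombination ℂ fun j : Fin n ↦ conj ζ ^ (j.val + 1)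

/-- The derivative `∑ⱼ j zⱼ ζ̄ʲ⁻¹` of `modelPotential` with respect to `ζ̄`. -/
noncomputable def modelPotentialDeriv (ζ : ℂ) : (Fin n → ℂ) →ₗ[ℂ] ℂ :=
  Fintype.linearCombination ℂ fun j : Fin n ↦ (j.val + 1) * conj ζ ^ j.val

/-- The real hypersurface `Im w = 2 Re ∑ⱼ zⱼ ζ̄ʲ` in `ℂⁿ × ℂ × ℂ`, with coordinates
`(z, ζ, w)`. -/
def modelHypersurface (n : ℕ) : Set ((Fin n → ℂ) × ℂ × ℂ) :=
  {p | p.2.2.im = 2 * (modelPotential p.2.1 p.1).re}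

/-- The real tangent space of `modelHypersurface n` at a point `(z, ζ, w)`, as a space of vectors
`(f, h, e)`. It depends on `(z, ζ)` only. As `∑ⱼ zⱼ ζ̄ʲ` is antiholomorphic in `ζ`, its
derivative along the vector involves `conj h`. -/
def modelTangentSpace (z : Fin n → ℂ) (ζ : ℂ) : Submodule ℝ ((Fin n → ℂ) × ℂ × ℂ) where
  carrier := {v | v.2.2.im =
    2 * (modelPotential ζ v.1 + conj v.2.1 * modelPotentialDeriv ζ z).re}
  zero_mem' := by simp
  add_mem' {u v} hu hv := by
    simp only [Set.mem_ofPred_eq, Prod.fst_add, Prod.snd_add, map_add, add_mul, add_im, add_re]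
      at hu hv ⊢
    linarith
  smul_mem' r v hv := by
    have potential_smul : modelPotential ζ (r • v.1) = r * modelPotential ζ v.1 := by
      rw [← Complex.coe_smul, map_smul, smul_eq_mul]
    simp only [Set.mem_ofPred_eq, Prod.smul_fst, Prod.smul_snd, potential_smul, real_smul,
      map_mul, conj_ofReal, mul_assoc, ← mul_add, im_ofReal_mul, re_ofReal_mul] at hv ⊢
    rw [hv]
    ring

theorem modelPotential_apply (ζ : ℂ) (z : Fin n → ℂ) :
    modelPotential ζ z = ∑ j, z j * conj ζ ^ (j.val + 1) := rfl

theorem modelPotentialDeriv_apply (ζ : ℂ) (z : Fin n → ℂ) :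
    modelPotentialDeriv ζ z = ∑ j, z j * ((j.val + 1) * conj ζ ^ j.val) := rfl

theorem modelPotential_single (ζ : ℂ) (j : Fin n) (a : ℂ) :
    modelPotential ζ (Pi.single j a) = a * conj ζ ^ (j.val + 1) :=
  Fintype.linearCombination_apply_single ℂ _ j a

theorem conj_mul_modelPotentialDeriv (ζ : ℂ) (z : Fin n → ℂ) :
    conj ζ * modelPotentialDeriv ζ z = modelPotential ζ fun j ↦ (j.val + 1) * z j := by
  simp only [modelPotential_apply, modelPotentialDeriv_apply, Finset.mul_sum]
  exact Finset.sum_congr rfl fun j _ ↦ by ring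

theorem modelPotential_cons (ζ x : ℂ) (z : Fin n → ℂ) :
    modelPotential ζ (Fin.cons x z : Fin (n + 1) → ℂ) = conj ζ * (x + modelPotential ζ z) := by
  simp only [modelPotential_apply, Fin.sum_univ_succ, Fin.cons_zero, Fin.cons_succ, Fin.val_zero,
    Fin.val_succ, mul_add, Finset.mul_sum]
  congr 1
  · ring
  · exact Finset.sum_congr rfl fun j _ ↦ by ring

theorem modelPotential_snoc_zero (ζ : ℂ) (z : Fin n → ℂ) :
    modelPotential ζ (Fin.snoc z 0 : Fin (n + 1) → ℂ) = modelPotential ζ z := by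
  simp [modelPotential_apply, Fin.sum_univ_castSucc]

theorem modelPotentialDeriv_succ (ζ : ℂ) (z : Fin (n + 1) → ℂ) :
    modelPotentialDeriv ζ z = z 0 + modelPotential ζ fun j : Fin n ↦ (j.val + 2) * z j.succ := by
  simp only [modelPotential_apply, modelPotentialDeriv_apply, Fin.sum_univ_succ, Fin.val_zero,
    Fin.val_succ]
  congr 1
  · simp
  · refine Finset.sum_congr rfl fun j _ ↦ ?_
    push_cast
    ring

theorem modelPotential_sub_mul_castSucc (ζ : ℂ) (z : Fin (n + 1) → ℂ) :
    (modelPotential ζ fun j : Fin n ↦ (n - j.val) * z j.castSucc) =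
      (n + 1) * modelPotential ζ z - conj ζ * modelPotentialDeriv ζ z := by
  have snoc_eq : (Fin.snoc (fun j : Fin n ↦ (n - j.val) * z j.castSucc) 0 : Fin (n + 1) → ℂ) =
      (n + 1 : ℂ) • z - fun j ↦ (j.val + 1) * z j := by
    refine funext (Fin.lastCases ?_ fun j ↦ ?_)
    · simp
    · simp only [Fin.snoc_castSucc, Pi.sub_apply, Pi.smul_apply, smul_eq_mul, Fin.val_castSucc]
      ring
  rw [← modelPotential_snoc_zero, snoc_eq, map_sub, map_smul, smul_eq_mul,
    conj_mul_modelPotentialDeriv]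

theorem mem_modelHypersurface {z : Fin n → ℂ} {ζ w : ℂ} :
    (z, ζ, w) ∈ modelHypersurface n ↔ w.im = 2 * (modelPotential ζ z).re := Iff.rfl

theorem mem_modelTangentSpace {z f : Fin n → ℂ} {ζ h e : ℂ} :
    (f, h, e) ∈ modelTangentSpace z ζ ↔
      e.im = 2 * (modelPotential ζ f + conj h * modelPotentialDeriv ζ z).re := Iff.rfl

theorem translation_w_mem_modelTangentSpace (z : Fin n → ℂ) (ζ : ℂ) (d : ℝ) :
    (0, 0, (d : ℂ)) ∈ modelTangentSpace z ζ := by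
  simp [mem_modelTangentSpace]

theorem translation_z_mem_modelTangentSpace (z : Fin n → ℂ) (ζ : ℂ) (j : Fin n) (a : ℂ) :
    (Pi.single j a, 0, 2 * I * conj a * ζ ^ (j.val + 1)) ∈ modelTangentSpace z ζ := by
  have conj_form : 2 * I * conj a * ζ ^ (j.val + 1) =
      2 * I * conj (a * conj ζ ^ (j.val + 1)) := by
    simp only [map_mul, map_pow, conj_conj, mul_assoc]
  rw [mem_modelTangentSpace, modelPotential_single, conj_form, map_zero, zero_mul, add_zero,
    im_two_I_mul, conj_re]

theorem shear_mem_modelTangentSpace (z : Fin n → ℂ) (ζ : ℂ) (j k : Fin n) (m : ℂ) :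
    (Pi.single j (m * ζ ^ (k.val + 1)) - Pi.single k (conj m * ζ ^ (j.val + 1)), 0, 0) ∈
      modelTangentSpace z ζ := by
  have sub_conj_form : modelPotential ζ
      (Pi.single j (m * ζ ^ (k.val + 1)) - Pi.single k (conj m * ζ ^ (j.val + 1))) =
      m * ζ ^ (k.val + 1) * conj ζ ^ (j.val + 1) -
        conj (m * ζ ^ (k.val + 1) * conj ζ ^ (j.val + 1)) := by
    simp only [map_sub, modelPotential_single, map_mul, map_pow, conj_conj]
    ring
  rw [mem_modelTangentSpace, sub_conj_form, map_zero, zero_mul, add_zero, sub_re, conj_re,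
    sub_self, mul_zero, zero_im]

theorem dilation_mem_modelTangentSpace {z : Fin n → ℂ} {ζ w : ℂ}
    (hp : (z, ζ, w) ∈ modelHypersurface n) (s : ℝ) (μ : ℂ) :
    ((s : ℂ) • z - conj μ • fun j ↦ (j.val + 1) * z j, μ * ζ, s * w) ∈
      modelTangentSpace z ζ := by
  rw [mem_modelHypersurface] at hp
  rw [mem_modelTangentSpace, map_sub, map_smul, map_smul, ← conj_mul_modelPotentialDeriv,
    smul_eq_mul, smul_eq_mul, map_mul, mul_assoc, sub_add_cancel, im_ofReal_mul, re_ofReal_mul, hp]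
  ring

theorem translation_ζ_mem_modelTangentSpace (z : Fin (n + 1) → ℂ) (ζ c : ℂ) :
    (Fin.snoc (-(conj c • fun j : Fin n ↦ (j.val + 2) * z j.succ)) 0, c, 2 * I * conj c * z 0) ∈
      modelTangentSpace z ζ := by
  have potential_eq : modelPotential ζ
      (Fin.snoc (-(conj c • fun j : Fin n ↦ (j.val + 2) * z j.succ)) 0 : Fin (n + 1) → ℂ) +
      conj c * modelPotentialDeriv ζ z = conj c * z 0 := by
    rw [modelPotential_snoc_zero, map_neg, map_smul, smul_eq_mul, modelPotentialDeriv_succ]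
    ring
  rw [mem_modelTangentSpace, potential_eq, mul_assoc (2 * I), im_two_I_mul]

theorem quadratic_mem_modelTangentSpace {z : Fin (n + 1) → ℂ} {ζ w : ℂ}
    (hp : (z, ζ, w) ∈ modelHypersurface (n + 1)) (ν : ℂ) :
    ((2 * (n + 1) * I * conj ν * ζ) • z + Fin.cons ((n + 1) * ν * w)
        (-((2 * I * ν) • fun j : Fin n ↦ (n - j.val) * z j.castSucc)),
      2 * I * conj ν * ζ ^ 2, 2 * (n + 1) * I * conj ν * ζ * w) ∈ modelTangentSpace z ζ := by
  set α := conj ν * ζ with hα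
  have potential_eq : modelPotential ζ ((2 * (n + 1) * I * conj ν * ζ) • z +
        Fin.cons ((n + 1) * ν * w)
          (-((2 * I * ν) • fun j : Fin n ↦ (n - j.val) * z j.castSucc))) +
      conj (2 * I * conj ν * ζ ^ 2) * modelPotentialDeriv ζ z =
      (n + 1 : ℝ) * (2 * I * (α - conj α) * modelPotential ζ z + conj α * w) := by
    rw [map_add, map_smul, modelPotential_cons, map_neg, map_smul, modelPotential_sub_mul_castSucc]
    simp only [hα, map_mul, map_pow, conj_conj, conj_I, map_ofNat, smul_eq_mul]
    push_cast
    ring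
  have im_eq : (2 * (n + 1) * I * conj ν * ζ * w).im = 2 * ((n + 1) * (α * w).re) := by
    have real_factor : 2 * (n + 1) * I * conj ν * ζ * w = (n + 1 : ℝ) * (2 * I * (α * w)) := by
      rw [hα]
      push_cast
      ring
    rw [real_factor, im_ofReal_mul, im_two_I_mul]
    ring
  rw [mem_modelTangentSpace, potential_eq, re_ofReal_mul,
    re_two_I_mul_sub_conj_mul_add (mem_modelHypersurface.1 hp), im_eq]

end ModelHypersurface

theorem mem_modelTangentSpace_two (z₁ z₂ ζ f g h e : ℂ) :
    (![f, g], h, e) ∈ modelTangentSpace ![z₁, z₂] ζ ↔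
      e.im = 2 * (f * conj ζ + g * conj ζ ^ 2 + h * (conj z₁ + 2 * conj z₂ * ζ)).re := by
  have conj_deriv : conj (modelPotentialDeriv ζ ![z₁, z₂]) = conj z₁ + 2 * conj z₂ * ζ := by
    simp only [modelPotentialDeriv_apply, Fin.sum_univ_two, Matrix.cons_val_zero,
      Matrix.cons_val_one, Fin.val_zero, Fin.val_one, Nat.cast_zero, Nat.cast_one, map_add, map_mul,
      map_pow, map_zero, map_one, conj_conj]
    ring
  rw [mem_modelTangentSpace, add_re, ← conj_re (conj h * _), map_mul, conj_conj, conj_deriv,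
    ← add_re]
  simp [modelPotential_apply, Fin.sum_univ_two]

/-- For all parameters `d κ l n ∈ ℝ`, `a b c m M N ∈ ℂ`, the explicit polynomial
4-tuple `(f, g, h, e)` is tangent to the model hypersurface
`Q = {Im w = 2 Re (z₁ ζ̄) + 2 Re (z₂ ζ̄²)}` at every point of `Q`. -/
theorem stmt_7 (d κ l n : ℝ) (a b c m M N : ℂ) (z1 z2 ζ w : ℂ)
    (hQ : w.im = 2 * (z1 * conj ζ).re + 2 * (z2 * (conj ζ) ^ 2).re) :
    ((d : ℂ) + 2 * I * conj a * ζ + 2 * I * conj c * z1 + 2 * I * conj b * ζ ^ 2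
        + 3 * (l : ℂ) * w + 2 * I * conj N * ζ * w).im =
      2 * ((a - 2 * conj c * z2 + I * (κ : ℂ) * ζ + M * z1 + m * ζ ^ 2
              + 2 * I * conj N * z1 * ζ + N * w) * conj ζ
          + (b + (2 * M - 3 * (l : ℂ)) * z2 - conj m * ζ + 2 * I * conj N * z2 * ζ
              - I * N * z1 + I * (n : ℂ) * ζ ^ 2) * (conj ζ) ^ 2
          + (c + (3 * (l : ℂ) - conj M) * ζ + I * conj N * ζ ^ 2)
              * (conj z1 + 2 * conj z2 * ζ)).re := by
  have hp : (![z1, z2], ζ, w) ∈ modelHypersurface 2 := by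
    rw [mem_modelHypersurface, modelPotential_apply, hQ]
    simp [Fin.sum_univ_two, mul_add]
  have translations := add_mem
    (add_mem (translation_w_mem_modelTangentSpace ![z1, z2] ζ d)
      (translation_ζ_mem_modelTangentSpace ![z1, z2] ζ c))
    (add_mem (translation_z_mem_modelTangentSpace ![z1, z2] ζ 0 a)
      (translation_z_mem_modelTangentSpace ![z1, z2] ζ 1 b))
  -- A shear with `j = k` has `m - conj m` as coefficient, which doubles an imaginary `m`.
  have shears := add_mem
    (add_mem (shear_mem_modelTangentSpace ![z1, z2] ζ 0 0 (I * κ / 2))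
      (shear_mem_modelTangentSpace ![z1, z2] ζ 1 1 (I * n / 2)))
    (shear_mem_modelTangentSpace ![z1, z2] ζ 0 1 m)
  have dilation := dilation_mem_modelTangentSpace hp (3 * l) (3 * l - conj M)
  have quadratic := quadratic_mem_modelTangentSpace hp (N / 2)
  rw [← mem_modelTangentSpace_two]
  convert add_mem (add_mem translations shears) (add_mem dilation quadratic) using 1
  refine Prod.ext (funext (Fin.forall_fin_two.2 ⟨?_, ?_⟩)) (Prod.ext ?_ ?_) <;>
    simp [Fin.snoc, Matrix.vecHead, Matrix.vecTail, map_ofNat] <;> ring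
end
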